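/- arXiv:math/9803129 — 3 statements merged into one kernel-verified Lean document; each statement's English description precedes it below -/
import Mathlib

section
/- Let H = −h² d²/dx² + V_h(x) on L²(ℝ) (any closed extension of its restriction to C_c^∞(ℝ)), where V_h are smooth complex potentials depending continuously on h together with all derivatives. Let z = η² + V_h(a) with η ∈ ℝ \ {0} and Im(V₀′(a)) ≠ 0, where η has the same sign as Im(V_h′(a)). Then there exists δ > 0 and for each n > 0 a constant c_n > 0 and h-dependent functions f̃ ∈ C_c^∞(ℝ) such that ‖H f̃ − z f̃‖ ≤ c_n h^n ‖f̃‖ for all 0 < h < δ. -/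
/-!
The pseudomode is `f = χ exp(h⁻¹ ∫ₐ U)`, with `χ` a cutoff near `a`. Where `χ = 1`,
`-h² f'' + (V_h - z) f = -(h U' + U² - Q) f` with `Q = V_h - z`, so that `U` should solve the
semiclassical Riccati equation `h U' + U² = Q` up to `O(h ^ n)`. This packages the phase and all
the transport equations of the JWKB method into one equation.

The leading term is the eikonal solution `u = √Q`, with `u(a) = iσ`, `σ = ±η`. The corrections come
from the iteration `U ↦ U - R / (2u)`, where `R` is the current residual: each step gains a factor
`h` (`exists_riccati`). For this to be uniform in `h`, everything is done in the class `Nice` of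
families of smooth functions with all derivatives bounded uniformly in the parameter; `√Q` and
`1 / √Q` belong to it (`nice_root`) because `v = 1 / √Q` satisfies `v' = -Q' v³ / 2`. To have
functions on all of `ℝ`, `V_h - V_h(a)` is first multiplied by an inner cutoff equal to `1` near the
support of `χ`.

Since `Re u'(a) = Im V_h'(a) / (2σ)`, one of the signs of `σ` makes `Re u' ≤ -c < 0` near `a`, for
all small `h` (`exists_nhds`), hence `|exp(h⁻¹ ∫ₐˣ U)| ≤ C exp(-c (x - a)² / (2h))`
(`re_phase_le`). The terms with derivatives of `χ` are therefore exponentially small, while the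
mass of `f` is at least a constant times `h`, because `|f|` is bounded below on `[a - h, a + h]`
(`exists_mode`).
-/

open Set MeasureTheory Filter Topology
open scoped ContDiff

namespace Pseudomode

/-! ### Families of smooth functions with uniform bounds -/

/-- `BddUpTo n F`: for a family of functions `F i : ℝ → ℂ`, all derivatives of order at most `n`
are bounded on `ℝ`, uniformly in the parameter `i`. -/
def BddUpTo {ι : Type*} (n : ℕ) (F : ι → ℝ → ℂ) : Prop :=
  ∀ k ≤ n, ∃ C : ℝ, ∀ i x, ‖iteratedDeriv k (F i) x‖ ≤ C

/-- A family of smooth functions on `ℝ` every derivative of which is bounded, uniformly in the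
parameter. This is the algebra in which the Riccati equation is solved approximately; the
parameter `i` will range over the semiclassical parameters `h`. -/
def Nice {ι : Type*} (F : ι → ℝ → ℂ) : Prop :=
  (∀ i, ContDiff ℝ ∞ (F i)) ∧ ∀ n, BddUpTo n F

variable {ι : Type*}

lemma BddUpTo.mul {n : ℕ} {F G : ι → ℝ → ℂ} (hF : ∀ i, ContDiff ℝ ∞ (F i))
    (hG : ∀ i, ContDiff ℝ ∞ (G i)) (bF : BddUpTo n F) (bG : BddUpTo n G) :
    BddUpTo n (fun i x => F i x * G i x) := by
  intro k hk
  choose! C hC using bF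
  choose! D hD using bG
  refine ⟨∑ j ∈ Finset.range (k + 1), k.choose j * C j * D (k - j), fun i x => ?_⟩
  rw [iteratedDeriv_fun_mul ((hF i).of_le (by exact_mod_cast le_top)).contDiffAt
    ((hG i).of_le (by exact_mod_cast le_top)).contDiffAt]
  refine (norm_sum_le _ _).trans (Finset.sum_le_sum fun j hj => ?_)
  have hj' : j ≤ n := by have := Finset.mem_range.1 hj; omega
  have h1 := hC j hj' i x
  have h2 := hD (k - j) (by omega) i x
  have h0 := (norm_nonneg _).trans h1
  rw [norm_mul, norm_mul, Complex.norm_natCast]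
  gcongr

lemma bddUpTo_succ {n : ℕ} {F : ι → ℝ → ℂ} (h0 : ∃ C : ℝ, ∀ i x, ‖F i x‖ ≤ C)
    (h1 : BddUpTo n (fun i => deriv (F i))) : BddUpTo (n + 1) F := by
  intro k hk
  cases k with
  | zero => simpa using h0
  | succ k =>
    obtain ⟨C, hC⟩ := h1 k (by omega)
    exact ⟨C, fun i x => by rw [iteratedDeriv_succ']; exact hC i x⟩

lemma Nice.bound {F : ι → ℝ → ℂ} (hF : Nice F) : ∃ C : ℝ, ∀ i x, ‖F i x‖ ≤ C := by
  simpa using hF.2 0 0 le_rfl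

lemma Nice.deriv {F : ι → ℝ → ℂ} (hF : Nice F) : Nice (fun i => deriv (F i)) := by
  refine ⟨fun i => (contDiff_infty_iff_deriv.1 (hF.1 i)).2, fun n k _ => ?_⟩
  obtain ⟨C, hC⟩ := hF.2 (k + 1) (k + 1) le_rfl
  exact ⟨C, fun i x => by rw [← iteratedDeriv_succ']; exact hC i x⟩

lemma Nice.mul {F G : ι → ℝ → ℂ} (hF : Nice F) (hG : Nice G) :
    Nice (fun i x => F i x * G i x) :=
  ⟨fun i => (hF.1 i).mul (hG.1 i), fun n => (hF.2 n).mul hF.1 hG.1 (hG.2 n)⟩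

lemma Nice.add {F G : ι → ℝ → ℂ} (hF : Nice F) (hG : Nice G) :
    Nice (fun i x => F i x + G i x) := by
  refine ⟨fun i => (hF.1 i).add (hG.1 i), fun n k _ => ?_⟩
  obtain ⟨C, hC⟩ := hF.2 k k le_rfl
  obtain ⟨D, hD⟩ := hG.2 k k le_rfl
  refine ⟨C + D, fun i x => ?_⟩
  rw [iteratedDeriv_fun_add ((hF.1 i).of_le (by exact_mod_cast le_top)).contDiffAt
    ((hG.1 i).of_le (by exact_mod_cast le_top)).contDiffAt]
  exact (norm_add_le _ _).trans (add_le_add (hC i x) (hD i x))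

lemma nice_const {c : ι → ℂ} {C : ℝ} (hc : ∀ i, ‖c i‖ ≤ C) : Nice (fun i (_ : ℝ) => c i) := by
  refine ⟨fun i => contDiff_const, fun n k _ => ⟨C, fun i x => ?_⟩⟩
  rw [iteratedDeriv_const]
  split_ifs
  · exact hc i
  · simpa using (norm_nonneg _).trans (hc i)

lemma Nice.smul {F : ι → ℝ → ℂ} (hF : Nice F) {c : ι → ℂ} {C : ℝ} (hc : ∀ i, ‖c i‖ ≤ C) :
    Nice (fun i x => c i * F i x) := (nice_const hc).mul hF

/-- Multiplying by a fixed smooth cutoff turns bounds of the derivatives on its compact support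
into bounds on all of `ℝ`. -/
lemma nice_cutoff {W : ι → ℝ → ℂ} (hW : ∀ i, ContDiff ℝ ∞ (W i)) {χ : ℝ → ℂ}
    (hχ : ContDiff ℝ ∞ χ) (hs : HasCompactSupport χ)
    (hb : ∀ k, ∃ C : ℝ, ∀ i, ∀ x ∈ tsupport χ, ‖iteratedDeriv k (W i) x‖ ≤ C) :
    Nice (fun i x => χ x * W i x) := by
  refine ⟨fun i => hχ.mul (hW i), fun n k _ => ?_⟩
  choose C hC using hb
  have hd : ∀ k, ∃ D : ℝ, ∀ x ∈ tsupport χ, ‖iteratedDeriv k χ x‖ ≤ D := fun k =>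
    hs.isCompact.exists_bound_of_continuousOn
      (hχ.continuous_iteratedDeriv k (by exact_mod_cast le_top)).continuousOn
  choose D hD using hd
  refine ⟨max 0 (∑ j ∈ Finset.range (k + 1), k.choose j * D j * C (k - j)), fun i x => ?_⟩
  by_cases hx : x ∈ tsupport χ
  · refine le_max_of_le_right ?_
    rw [iteratedDeriv_fun_mul (hχ.of_le (by exact_mod_cast le_top)).contDiffAt
      ((hW i).of_le (by exact_mod_cast le_top)).contDiffAt]
    refine (norm_sum_le _ _).trans (Finset.sum_le_sum fun j hj => ?_)
    have h1 := hD j x hx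
    have h2 := hC (k - j) i x hx
    have h0 := (norm_nonneg _).trans h1
    rw [norm_mul, norm_mul, Complex.norm_natCast]
    gcongr
  · refine le_max_of_le_left ?_
    have h0 : (fun x => χ x * W i x) =ᶠ[𝓝 x] fun _ => 0 := by
      filter_upwards [(isClosed_tsupport χ).isOpen_compl.mem_nhds hx] with y hy
      rw [image_eq_zero_of_notMem_tsupport hy, zero_mul]
    rw [h0.iteratedDeriv_eq]
    simp

/-- If `u² = Q` with `Q` nice and bounded away from `0`, then `u` and `1/u` are nice. The
inverse `v = 1/u` satisfies `v' = -Q' v³ / 2`, so each bound on derivatives of `v` yields one more. -/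
lemma nice_root {Q u : ι → ℝ → ℂ} (hQ : Nice Q) (hu : ∀ i, ContDiff ℝ ∞ (u i))
    (huQ : ∀ i x, u i x * u i x = Q i x) {m : ℝ} (hm : 0 < m) (hmu : ∀ i x, m ≤ ‖u i x‖) :
    Nice u ∧ Nice (fun i x => (u i x)⁻¹) := by
  have hne : ∀ i x, u i x ≠ 0 := fun i x => norm_pos_iff.1 (hm.trans_le (hmu i x))
  have hv : ∀ i, ContDiff ℝ ∞ (fun x => (u i x)⁻¹) := fun i => (hu i).inv (hne i)
  have hud : ∀ i x, HasDerivAt (u i) (deriv (u i) x) x := fun i x =>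
    ((hu i).differentiable (by simp) x).hasDerivAt
  have hdQ : ∀ i x, deriv (Q i) x = 2 * u i x * deriv (u i) x := by
    intro i x
    have h := (hud i x).mul (hud i x)
    have : (u i * u i) = Q i := funext fun y => huQ i y
    rw [this] at h
    rw [h.deriv]; ring
  have hdv : ∀ i, deriv (fun x => (u i x)⁻¹) =
      fun x => ((-1 / 2 : ℂ) * deriv (Q i) x) * ((u i x)⁻¹ * ((u i x)⁻¹ * (u i x)⁻¹)) := by
    intro i
    funext x
    have h := ((hud i x).inv (hne i x)).deriv
    have := hne i x
    rw [show (fun x => (u i x)⁻¹) = (u i)⁻¹ from rfl, h, hdQ]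
    field_simp
  have h0 : ∃ C : ℝ, ∀ i x, ‖(u i x)⁻¹‖ ≤ C := ⟨m⁻¹, fun i x => by
    rw [norm_inv]; exact inv_anti₀ hm (hmu i x)⟩
  have hv' : Nice (fun i x => (u i x)⁻¹) := by
    refine ⟨hv, fun n => ?_⟩
    induction n with
    | zero =>
      intro k hk
      obtain rfl : k = 0 := by omega
      simpa using h0
    | succ n ih =>
      refine bddUpTo_succ h0 ?_
      simp only [hdv]
      have hQ' := hQ.deriv.smul (c := fun _ => (-1 / 2 : ℂ)) (fun _ => le_rfl)
      exact (hQ'.2 n).mul hQ'.1 (fun i => (hv i).mul ((hv i).mul (hv i)))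
        (ih.mul hv (fun i => (hv i).mul (hv i)) (ih.mul hv hv ih))
  refine ⟨?_, hv'⟩
  have : u = fun i x => Q i x * (u i x)⁻¹ := by
    funext i x
    rw [← huQ, mul_assoc, mul_inv_cancel₀ (hne i x), mul_one]
  rw [this]
  exact hQ.mul hv'

/-! ### The Riccati equation -/

/-- Approximate solution of the semiclassical Riccati equation `h U' + U² = Q` to any order,
starting from a square root `u` of `Q`. The step from `N` to `N + 1` subtracts `R / (2u)` from
`U = u + h D`, where `R = h ^ (N + 1) S` is the current residual. -/
lemma exists_riccati {Q u : ι → ℝ → ℂ} (hh : ι → ℂ) (hh1 : ∀ i, ‖hh i‖ ≤ 1)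
    (hu : Nice u) (hv : Nice (fun i x => (u i x)⁻¹)) (hne : ∀ i x, u i x ≠ 0)
    (huQ : ∀ i x, u i x * u i x = Q i x) (N : ℕ) :
    ∃ D S : ι → ℝ → ℂ, Nice D ∧ Nice S ∧ ∀ i x,
      hh i * deriv (fun y => u i y + hh i * D i y) x + (u i x + hh i * D i x) ^ 2 - Q i x
        = hh i ^ (N + 1) * S i x := by
  have dif : ∀ {F : ι → ℝ → ℂ}, Nice F → ∀ i x, HasDerivAt (F i) (deriv (F i) x) x :=
    fun hF i x => ((hF.1 i).differentiable (by simp) x).hasDerivAt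
  have hpow : ∀ N i, ‖hh i ^ N‖ ≤ (1 : ℝ) := fun N i => by
    rw [norm_pow]; exact pow_le_one₀ (norm_nonneg _) (hh1 i)
  induction N with
  | zero =>
    refine ⟨fun _ _ => 0, fun i => deriv (u i), nice_const (C := 0) (by simp), hu.deriv, ?_⟩
    intro i x
    simp only [mul_zero, add_zero, ← huQ]
    ring
  | succ N ih =>
    obtain ⟨D, S, hD, hS, hE⟩ := ih
    let v : ι → ℝ → ℂ := fun i x => (u i x)⁻¹
    let P : ι → ℝ → ℂ := fun i x => (-1 / 2 : ℂ) * (v i x * S i x)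
    have hP : Nice P := (hv.mul hS).smul (c := fun _ => (-1 / 2 : ℂ)) (fun _ => le_rfl)
    refine ⟨fun i x => D i x + hh i ^ N * P i x,
      fun i x => (deriv (P i) x + 2 * (D i x * P i x)) + hh i ^ N * (P i x * P i x),
      hD.add (hP.smul (hpow N)),
      (hP.deriv.add ((hD.mul hP).smul (c := fun _ => (2 : ℂ)) (fun _ => le_rfl))).add
        ((hP.mul hP).smul (hpow N)), ?_⟩
    intro i x
    have e := hE i x
    have d1 : deriv (fun y => u i y + hh i * D i y) x = deriv (u i) x + hh i * deriv (D i) x :=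
      ((dif hu i x).add ((dif hD i x).const_mul _)).deriv
    have d2 : deriv (fun y => u i y + hh i * (D i y + hh i ^ N * P i y)) x =
        deriv (u i) x + hh i * (deriv (D i) x + hh i ^ N * deriv (P i) x) :=
      ((dif hu i x).add (((dif hD i x).add ((dif hP i x).const_mul _)).const_mul _)).deriv
    rw [d1] at e
    rw [d2]
    have hPS : 2 * u i x * P i x = - S i x := by
      simp only [P, v]
      have := hne i x
      field_simp
    linear_combination e + hh i ^ (N + 1) * hPS

/-! ### Decay of the phase -/

/-- A function with a critical point at `a` is maximal there on an interval where its second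
derivative is nonpositive. -/
lemma le_of_second_deriv_nonpos {g k l : ℝ → ℝ} {a ρ : ℝ} (hg : ∀ x, HasDerivAt g (k x) x)
    (hk : ∀ x, HasDerivAt k (l x) x) (hka : k a = 0) (hl : ∀ x, |x - a| ≤ ρ → l x ≤ 0)
    {x : ℝ} (hx : |x - a| ≤ ρ) : g x ≤ g a := by
  have gd : Differentiable ℝ g := fun x => (hg x).differentiableAt
  have kd : Differentiable ℝ k := fun x => (hk x).differentiableAt
  have anti : AntitoneOn k (Icc (a - ρ) (a + ρ)) := by
    refine antitoneOn_of_deriv_nonpos (convex_Icc _ _) kd.continuous.continuousOn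
      kd.differentiableOn fun y hy => ?_
    rw [(hk y).deriv]
    have := interior_subset hy
    exact hl y (abs_le.2 ⟨by linarith [this.1], by linarith [this.2]⟩)
  have hx' := abs_le.1 hx
  have hρ : 0 ≤ ρ := (abs_nonneg _).trans hx
  rcases le_total a x with hax | hax
  · have : AntitoneOn g (Icc a (a + ρ)) := by
      refine antitoneOn_of_deriv_nonpos (convex_Icc _ _) gd.continuous.continuousOn
        gd.differentiableOn fun y hy => ?_
      rw [(hg y).deriv, ← hka]
      have := interior_subset hy
      exact anti ⟨by linarith, by linarith⟩ ⟨by linarith [this.1], this.2⟩ this.1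
    exact this ⟨le_rfl, by linarith⟩ ⟨hax, by linarith⟩ hax
  · have : MonotoneOn g (Icc (a - ρ) a) := by
      refine monotoneOn_of_deriv_nonneg (convex_Icc _ _) gd.continuous.continuousOn
        gd.differentiableOn fun y hy => ?_
      rw [(hg y).deriv, ← hka]
      have := interior_subset hy
      exact anti ⟨this.1, by linarith [this.2]⟩ ⟨by linarith, by linarith⟩ this.2
    exact this ⟨by linarith, hax⟩ ⟨by linarith, le_rfl⟩ hax

lemma hasDerivAt_primitive {U : ℝ → ℂ} (hU : Continuous U) (a x : ℝ) :
    HasDerivAt (fun x => ∫ t in a..x, U t) (U x) x :=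
  intervalIntegral.integral_hasDerivAt_right (hU.intervalIntegrable _ _)
    (hU.stronglyMeasurableAtFilter _ _) hU.continuousAt

/-- Gaussian decay of the phase: if `Re u(a) = 0` and `Re u' ≤ -c` near `a`, then
`Re ∫ₐˣ u ≤ -c (x - a)² / 2`. -/
lemma re_phase_le {u : ℝ → ℂ} {a ρ c : ℝ} (hu : ContDiff ℝ ∞ u) (hua : (u a).re = 0)
    (hd : ∀ x, |x - a| ≤ ρ → (deriv u x).re ≤ -c) {x : ℝ} (hx : |x - a| ≤ ρ) :
    (∫ t in a..x, u t).re ≤ -c * (x - a) ^ 2 / 2 := by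
  have hre : ∀ {F : ℝ → ℂ} {F' : ℂ} {x : ℝ}, HasDerivAt F F' x →
      HasDerivAt (fun x => (F x).re) F'.re x := fun h =>
    Complex.reCLM.hasFDerivAt.comp_hasDerivAt _ h
  have key := le_of_second_deriv_nonpos (g := fun x => (∫ t in a..x, u t).re + c * (x - a) ^ 2 / 2)
    (k := fun x => (u x).re + c * (x - a)) (l := fun x => (deriv u x).re + c) (a := a) (ρ := ρ)
    (fun x => by
      have h1 := hre (hasDerivAt_primitive hu.continuous a x)
      have h2 := (((((hasDerivAt_id' x).sub_const a).fun_pow 2).const_mul c).div_const 2)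
      exact (h1.fun_add h2).congr_deriv (by push_cast; ring))
    (fun x => by
      have h1 := hre (hu.differentiable (by simp) x).hasDerivAt
      have h2 := ((hasDerivAt_id' x).sub_const a).const_mul c
      exact (h1.fun_add h2).congr_deriv (by ring))
    (by simp [hua]) (fun x hx => by linarith [hd x hx]) hx
  simp at key
  linarith

/-! ### The pseudomode at a fixed `h` -/

/-- The operator applied to `χ exp(Φ / h)` with `Φ' = U`: a multiple of the Riccati residual, plus
terms supported where the cutoff `χ` varies. -/
lemma op_formula {χ U Φ : ℝ → ℂ} {h : ℂ} (hh : h ≠ 0) (hχ : ContDiff ℝ ∞ χ) (hU : ContDiff ℝ ∞ U)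
    (hΦ : ∀ x, HasDerivAt Φ (U x) x) (w : ℂ) (x : ℝ) :
    -h ^ 2 * deriv (deriv fun x => χ x * Complex.exp (h⁻¹ * Φ x)) x
        + w * (χ x * Complex.exp (h⁻¹ * Φ x)) =
      -(h * deriv U x + U x ^ 2 - w) * (χ x * Complex.exp (h⁻¹ * Φ x))
        - (h ^ 2 * deriv (deriv χ) x + 2 * h * (deriv χ x * U x)) * Complex.exp (h⁻¹ * Φ x) := by
  have hE : ∀ x, HasDerivAt (fun x => Complex.exp (h⁻¹ * Φ x))
      (Complex.exp (h⁻¹ * Φ x) * (h⁻¹ * U x)) x := fun x => ((hΦ x).const_mul _).cexp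
  have hχ1 : ∀ x, HasDerivAt χ (deriv χ x) x := fun x =>
    (hχ.differentiable (by simp) x).hasDerivAt
  have hχ2 : HasDerivAt (deriv χ) (deriv (deriv χ) x) x :=
    ((contDiff_infty_iff_deriv.1 hχ).2.differentiable (by simp) x).hasDerivAt
  have hU1 : HasDerivAt U (deriv U x) x := (hU.differentiable (by simp) x).hasDerivAt
  have e1 : deriv (fun x => χ x * Complex.exp (h⁻¹ * Φ x)) = fun x =>
      deriv χ x * Complex.exp (h⁻¹ * Φ x) +
        χ x * (Complex.exp (h⁻¹ * Φ x) * (h⁻¹ * U x)) :=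
    funext fun x => ((hχ1 x).mul (hE x)).deriv
  rw [e1]
  have e2 := ((hχ2.fun_mul (hE x)).fun_add
    ((hχ1 x).fun_mul ((hE x).fun_mul (hU1.const_mul h⁻¹)))).deriv
  rw [e2]
  field_simp
  ring

lemma integrable_norm_sq {f : ℝ → ℂ} (hf : Continuous f) (hs : HasCompactSupport f) :
    Integrable (fun x => ‖f x‖ ^ 2) := by
  have hc : Continuous (fun x => ‖f x‖ ^ 2) := by fun_prop
  refine hc.integrable_of_hasCompactSupport (hs.mono fun x hx => ?_)
  rw [Function.mem_support] at hx ⊢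
  exact fun h => hx (by simp [h])

/-- A pointwise bound of `g` by `A |f|` plus an error `B` on a bounded interval, the latter being
dominated by the mass of `f`, gives an `L²` bound of `g` by `f`. -/
lemma l2_bound {f g : ℝ → ℂ} {a ρ A B L : ℝ} (hA : 0 ≤ A) (hρ : 0 ≤ ρ)
    (hf : Continuous f) (hs : HasCompactSupport f)
    (hg : ∀ x, ‖g x‖ ≤ A * ‖f x‖ + (Icc (a - ρ) (a + ρ)).indicator (fun _ => B) x)
    (hL : L ≤ ∫ x, ‖f x‖ ^ 2) (hAB : B ^ 2 * (2 * ρ) ≤ A ^ 2 * L) :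
    √(∫ x, ‖g x‖ ^ 2) ≤ 2 * A * √(∫ x, ‖f x‖ ^ 2) := by
  have hfi := integrable_norm_sq hf hs
  have hind : Integrable ((Icc (a - ρ) (a + ρ)).indicator (fun _ => 2 * B ^ 2)) :=
    (integrable_indicator_iff measurableSet_Icc).2 (integrableOn_const (by simp))
  have h1 : ∫ x, ‖g x‖ ^ 2 ≤ ∫ x, (2 * A ^ 2 * ‖f x‖ ^ 2 +
      (Icc (a - ρ) (a + ρ)).indicator (fun _ => 2 * B ^ 2) x) := by
    refine integral_mono_of_nonneg (ae_of_all _ fun x => by positivity)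
      ((hfi.const_mul _).add hind) (ae_of_all _ fun x => ?_)
    have h2 := pow_le_pow_left₀ (norm_nonneg _) (hg x) 2
    refine h2.trans ?_
    by_cases hx : x ∈ Icc (a - ρ) (a + ρ)
    · simp only [indicator_of_mem hx]
      nlinarith [sq_nonneg (A * ‖f x‖ - B)]
    · simp only [indicator_of_notMem hx]
      nlinarith [sq_nonneg (A * ‖f x‖)]
  rw [integral_add (hfi.const_mul _) hind, integral_const_mul,
    integral_indicator measurableSet_Icc, setIntegral_const] at h1
  have hvol : volume.real (Icc (a - ρ) (a + ρ)) = 2 * ρ := by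
    rw [Real.volume_real_Icc_of_le (by linarith)]; ring
  rw [hvol, smul_eq_mul] at h1
  refine Real.sqrt_le_iff.2 ⟨by positivity, ?_⟩
  rw [mul_pow, Real.sq_sqrt (by positivity)]
  have := mul_le_mul_of_nonneg_left hL (sq_nonneg A)
  nlinarith

/-- The pseudomode at one value of `h`: `χ exp(h⁻¹ ∫ₐ U)`, where `U` solves the Riccati equation
up to `A`, and `B` bounds the contribution of the region where `χ` varies. -/
lemma exists_mode {a ρ K M A B h : ℝ} (hh : 0 < h) (hρ : h ≤ ρ / 2) {W χ U : ℝ → ℂ}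
    (hχ : ContDiff ℝ ∞ χ) (hs : HasCompactSupport χ) (hχ1 : ∀ x, |x - a| ≤ ρ / 2 → χ x = 1)
    (hχ0 : ∀ x, ρ ≤ |x - a| → χ x = 0) (hK1 : ∀ x, ‖deriv χ x‖ ≤ K)
    (hK2 : ∀ x, ‖deriv (deriv χ) x‖ ≤ K) (hU : ContDiff ℝ ∞ U) (hM : ∀ x, ‖U x‖ ≤ M)
    (hA : ∀ x, |x - a| ≤ ρ → ‖(h : ℂ) * deriv U x + U x ^ 2 - W x‖ ≤ A)
    (hB : ∀ x, ρ / 2 ≤ |x - a| → |x - a| ≤ ρ →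
      (h ^ 2 * K + 2 * h * (K * M)) * ‖Complex.exp ((h : ℂ)⁻¹ * ∫ t in a..x, U t)‖ ≤ B)
    (hAB : B ^ 2 * (2 * ρ) ≤ A ^ 2 * (2 * h * Real.exp (-M) ^ 2)) :
    ∃ f : ℝ → ℂ, ContDiff ℝ ∞ f ∧ HasCompactSupport f ∧ f ≠ 0 ∧
      √(∫ x, ‖-(h : ℂ) ^ 2 * deriv (deriv f) x + W x * f x‖ ^ 2)
        ≤ 2 * A * √(∫ x, ‖f x‖ ^ 2) := by
  have hρ0 : 0 < ρ := by linarith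
  have hA0 : 0 ≤ A := (norm_nonneg _).trans (hA a (by simp [hρ0.le]))
  have hK0 : 0 ≤ K := (norm_nonneg _).trans (hK1 a)
  have hM0 : 0 ≤ M := (norm_nonneg _).trans (hM a)
  have hh' : (h : ℂ) ≠ 0 := by exact_mod_cast hh.ne'
  let Φ : ℝ → ℂ := fun x => ∫ t in a..x, U t
  have hΦ : ∀ x, HasDerivAt Φ (U x) x := hasDerivAt_primitive hU.continuous a
  have hΦs : ContDiff ℝ ∞ Φ := contDiff_infty_iff_deriv.2
    ⟨fun x => (hΦ x).differentiableAt, by rwa [show deriv Φ = U from funext fun x => (hΦ x).deriv]⟩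
  let f : ℝ → ℂ := fun x => χ x * Complex.exp ((h : ℂ)⁻¹ * Φ x)
  have hfs : ContDiff ℝ ∞ f := hχ.mul (contDiff_const.mul hΦs).cexp
  have hfc : HasCompactSupport f := hs.mul_right
  have hB0 : 0 ≤ B := by
    refine le_trans ?_ (hB (a + ρ) (by rw [add_sub_cancel_left, abs_of_pos hρ0]; linarith)
      (by rw [add_sub_cancel_left, abs_of_pos hρ0]))
    positivity
  have hlow : ∀ x ∈ Icc (a - h) (a + h), Real.exp (-M) ≤ ‖f x‖ := by
    intro x hx
    have hxa : |x - a| ≤ h := abs_le.2 ⟨by linarith [hx.1], by linarith [hx.2]⟩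
    have h1 : ‖Φ x‖ ≤ M * |x - a| :=
      intervalIntegral.norm_integral_le_of_norm_le_const fun t _ => hM t
    simp only [f]
    rw [hχ1 x (by linarith), one_mul, Complex.norm_exp]
    refine Real.exp_le_exp.2 ?_
    have h2 : ‖(h : ℂ)⁻¹ * Φ x‖ ≤ M := by
      rw [norm_mul, norm_inv, Complex.norm_real, Real.norm_of_nonneg hh.le, inv_mul_le_iff₀ hh]
      calc ‖Φ x‖ ≤ M * |x - a| := h1
        _ ≤ M * h := by gcongr
        _ = h * M := mul_comm _ _
    have := (Complex.abs_re_le_norm ((h : ℂ)⁻¹ * Φ x)).trans h2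
    exact (abs_le.1 this).1
  have hfi := integrable_norm_sq hfs.continuous hfc
  have hL : 2 * h * Real.exp (-M) ^ 2 ≤ ∫ x, ‖f x‖ ^ 2 := by
    calc 2 * h * Real.exp (-M) ^ 2 = ∫ x in Icc (a - h) (a + h), Real.exp (-M) ^ 2 := by
          rw [setIntegral_const, Real.volume_real_Icc_of_le (by linarith), smul_eq_mul]; ring
      _ ≤ ∫ x in Icc (a - h) (a + h), ‖f x‖ ^ 2 := by
          refine setIntegral_mono_on (integrableOn_const (by simp)) hfi.integrableOn
            measurableSet_Icc fun x hx => ?_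
          exact pow_le_pow_left₀ (Real.exp_nonneg _) (hlow x hx) 2
      _ ≤ ∫ x, ‖f x‖ ^ 2 := setIntegral_le_integral hfi (ae_of_all _ fun x => by positivity)
  refine ⟨f, hfs, hfc, ?_, ?_⟩
  · intro h0
    have := hlow a ⟨by linarith, by linarith⟩
    rw [h0] at this
    simp at this
    exact absurd this (not_le.2 (Real.exp_pos _))
  refine l2_bound (a := a) (ρ := ρ) (B := B) hA0 hρ0.le hfs.continuous hfc (fun x => ?_) hL hAB
  have hop := op_formula hh' hχ hU hΦ (W x) x
  change -(h : ℂ) ^ 2 * deriv (deriv f) x + W x * f x = _ at hop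
  rw [hop]
  rcases lt_or_ge ρ |x - a| with hx | hx
  · -- outside the support everything vanishes
    have hev : χ =ᶠ[𝓝 x] fun _ => 0 := by
      have : ∀ᶠ y in 𝓝 x, ρ < |y - a| :=
        (isOpen_lt continuous_const (by fun_prop)).mem_nhds hx
      filter_upwards [this] with y hy using hχ0 y hy.le
    have e1 : deriv χ x = 0 := by simp [hev.deriv_eq]
    have e2 : deriv (deriv χ) x = 0 := by simp [hev.deriv.deriv_eq]
    rw [e1, e2, hχ0 x hx.le]
    have : 0 ≤ (Icc (a - ρ) (a + ρ)).indicator (fun _ => B) x := indicator_nonneg (fun _ _ => hB0) x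
    have h2 : 0 ≤ A * ‖f x‖ := by positivity
    simpa using add_nonneg h2 this
  have hmem : x ∈ Icc (a - ρ) (a + ρ) :=
    ⟨by linarith [(abs_le.1 hx).1], by linarith [(abs_le.1 hx).2]⟩
  rw [indicator_of_mem hmem]
  refine (norm_sub_le _ _).trans (add_le_add ?_ ?_)
  · rw [norm_mul, norm_neg]
    exact mul_le_mul_of_nonneg_right (hA x hx) (norm_nonneg _)
  rcases lt_or_ge |x - a| (ρ / 2) with hx2 | hx2
  · have hev : χ =ᶠ[𝓝 x] fun _ => 1 := by
      have : ∀ᶠ y in 𝓝 x, |y - a| < ρ / 2 :=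
        (isOpen_lt (by fun_prop) continuous_const).mem_nhds hx2
      filter_upwards [this] with y hy using hχ1 y hy.le
    have e1 : deriv χ x = 0 := by simp [hev.deriv_eq]
    have e2 : deriv (deriv χ) x = 0 := by simp [hev.deriv.deriv_eq]
    rw [e1, e2]
    simpa using hB0
  · refine le_trans ?_ (hB x hx2 hx)
    rw [norm_mul]
    refine mul_le_mul_of_nonneg_right ((norm_add_le _ _).trans ?_) (norm_nonneg _)
    rw [norm_mul, norm_mul, norm_mul, norm_mul, norm_pow, Complex.norm_real,
      Real.norm_of_nonneg hh.le, Complex.norm_ofNat]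
    gcongr
    · exact hK2 x
    · exact hK1 x
    · exact hM x

/-- Exponential smallness in `1 / h` beats every power of `h`. -/
lemma exp_neg_div_le {c : ℝ} (hc : 0 < c) (n : ℕ) :
    ∃ C : ℝ, 0 ≤ C ∧ ∀ h : ℝ, 0 < h → Real.exp (-(c / h)) ≤ C * h ^ n := by
  refine ⟨n.factorial / c ^ n, by positivity, fun h hh => ?_⟩
  have h1 := Real.pow_div_factorial_le_exp (c / h) (by positivity) n
  rw [Real.exp_neg]
  have h2 : 0 < (c / h) ^ n / n.factorial := by positivity
  refine (inv_anti₀ h2 h1).trans (le_of_eq ?_)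
  rw [div_pow]
  field_simp

/-! ### The eikonal solution -/

/-- The branch of `√(w - σ²)` near `w = 0` which takes the value `iσ` at `w = 0`. -/
noncomputable def root (σ : ℝ) (w : ℂ) : ℂ :=
  Complex.I * σ * Complex.exp (Complex.log (1 - w / (σ : ℂ) ^ 2) / 2)

lemma root_zero (σ : ℝ) : root σ 0 = Complex.I * σ := by simp [root]

lemma root_slit {σ : ℝ} (hσ : σ ≠ 0) {w : ℂ} (hw : ‖w‖ < σ ^ 2 / 2) :
    1 - w / (σ : ℂ) ^ 2 ∈ Complex.slitPlane := by
  left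
  have hs : 0 < σ ^ 2 := by positivity
  have h1 : ‖w / (σ : ℂ) ^ 2‖ < 1 := by
    rw [norm_div, norm_pow, Complex.norm_real, Real.norm_eq_abs, sq_abs, div_lt_one hs]
    linarith
  have h2 := (Complex.abs_re_le_norm (w / (σ : ℂ) ^ 2)).trans_lt h1
  simp only [Complex.sub_re, Complex.one_re]
  linarith [(abs_lt.1 h2).2]

lemma root_mul_self {σ : ℝ} (hσ : σ ≠ 0) {w : ℂ} (hw : ‖w‖ < σ ^ 2 / 2) :
    root σ w * root σ w = w - (σ : ℂ) ^ 2 := by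
  have h0 := Complex.slitPlane_ne_zero (root_slit hσ hw)
  have h1 : Complex.exp (Complex.log (1 - w / (σ : ℂ) ^ 2) / 2) *
      Complex.exp (Complex.log (1 - w / (σ : ℂ) ^ 2) / 2) = 1 - w / (σ : ℂ) ^ 2 := by
    rw [← Complex.exp_add, add_halves, Complex.exp_log h0]
  have hσ' : (σ : ℂ) ≠ 0 := by exact_mod_cast hσ
  calc root σ w * root σ w
      = Complex.I ^ 2 * (σ : ℂ) ^ 2 * (Complex.exp (Complex.log (1 - w / (σ : ℂ) ^ 2) / 2) *
        Complex.exp (Complex.log (1 - w / (σ : ℂ) ^ 2) / 2)) := by rw [root]; ring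
    _ = w - (σ : ℂ) ^ 2 := by rw [h1, Complex.I_sq]; field_simp; ring

lemma contDiffAt_root {σ : ℝ} (hσ : σ ≠ 0) {w : ℂ} (hw : ‖w‖ < σ ^ 2 / 2) :
    ContDiffAt ℝ ∞ (root σ) w := by
  have h1 : ContDiffAt ℂ ∞ (root σ) w := by
    have h2 : ContDiffAt ℂ ∞ (fun w : ℂ => 1 - w / (σ : ℂ) ^ 2) w :=
      contDiffAt_const.sub (contDiffAt_id.div_const _)
    have h3 := (Complex.contDiffAt_log (n := ∞) (root_slit hσ hw)).comp w h2
    exact contDiffAt_const.mul ((h3.div_const 2).cexp)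
  exact h1.restrict_scalars ℝ

lemma root_norm {σ : ℝ} (hσ : σ ≠ 0) {w : ℂ} (hw : ‖w‖ < σ ^ 2 / 2) :
    √(σ ^ 2 / 2) ≤ ‖root σ w‖ := by
  refine Real.sqrt_le_iff.2 ⟨norm_nonneg _, ?_⟩
  rw [sq ‖_‖, ← norm_mul, root_mul_self hσ hw, norm_sub_rev]
  have h1 := norm_sub_norm_le ((σ : ℂ) ^ 2) w
  rw [norm_pow, Complex.norm_real, Real.norm_eq_abs, sq_abs] at h1
  linarith

/-- The neighbourhood on which the construction takes place: there `V_h(x) - V_h(a)` is small and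
`Re u' ≤ -c`, where `u = √(V_h - z)` is the eikonal solution and the sign of `σ = ±η` is such that
the exponential decays on both sides of `a`. -/
lemma exists_nhds {h₁ : ℝ} (hh₁ : 0 < h₁) {V : ℝ → ℝ → ℂ}
    (hcont : ∀ k : ℕ, ContinuousOn (fun p : ℝ × ℝ => iteratedDeriv k (V p.1) p.2)
      (Icc (0 : ℝ) h₁ ×ˢ (univ : Set ℝ)))
    {a σ : ℝ} (hσ : σ ≠ 0) (him : (deriv (V 0) a).im / σ < 0) :
    ∃ c > 0, ∃ ε > 0, ∀ h ∈ Icc (0 : ℝ) h₁, h < ε → ∀ x, |x - a| < ε →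
      ‖V h x - V h a‖ < σ ^ 2 / 2 ∧
      (deriv (V h) x / (2 * root σ (V h x - V h a))).re ≤ -c := by
  set s := Icc (0 : ℝ) h₁ ×ˢ (univ : Set ℝ) with hs
  have hmem : ((0 : ℝ), a) ∈ s := ⟨⟨le_rfl, hh₁.le⟩, trivial⟩
  have c0 : ContinuousOn (fun p : ℝ × ℝ => V p.1 p.2) s := by simpa using hcont 0
  have c1 : ContinuousOn (fun p : ℝ × ℝ => deriv (V p.1) p.2) s := by simpa using hcont 1
  have c2 : ContinuousOn (fun p : ℝ × ℝ => V p.1 a) s :=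
    c0.comp (f := fun p : ℝ × ℝ => (p.1, a)) (by fun_prop) fun p hp => ⟨hp.1, trivial⟩
  have cW := (c0.sub c2) (0, a) hmem
  have hs0 : 0 < σ ^ 2 / 2 := by positivity
  have croot : ContinuousAt (root σ) (V 0 a - V 0 a) :=
    (contDiffAt_root hσ (by simpa using hs0)).continuousAt
  have cr := croot.comp_continuousWithinAt (f := fun p : ℝ × ℝ => V p.1 p.2 - V p.1 a)
    (x := ((0 : ℝ), a)) cW
  have hr0 : root σ (V 0 a - V 0 a) = Complex.I * σ := by rw [sub_self, root_zero]
  have hσ' : (σ : ℂ) ≠ 0 := by exact_mod_cast hσ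
  have cG : ContinuousWithinAt (fun p : ℝ × ℝ =>
      (deriv (V p.1) p.2 / (2 * root σ (V p.1 p.2 - V p.1 a))).re) s (0, a) := by
    refine Complex.continuous_re.continuousAt.comp_continuousWithinAt
      ((c1 _ hmem).div (continuousWithinAt_const.mul cr) ?_)
    simp [root_zero, hσ]
  have hG0 : (deriv (V 0) a / (2 * root σ (V 0 a - V 0 a))).re = (deriv (V 0) a).im / σ / 2 := by
    rw [hr0]
    have : deriv (V 0) a / (2 * (Complex.I * σ)) =
        ((1 / (2 * σ) : ℝ) : ℂ) * (-Complex.I * deriv (V 0) a) := by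
      push_cast
      field_simp
      rw [Complex.I_sq]; ring
    rw [this, Complex.re_ofReal_mul]
    simp
    field_simp
  set c := -((deriv (V 0) a).im / σ / 4) with hc
  have hc0 : 0 < c := by linarith
  have ev1 : ∀ᶠ p in 𝓝[s] ((0 : ℝ), a),
      (deriv (V p.1) p.2 / (2 * root σ (V p.1 p.2 - V p.1 a))).re < -c := by
    refine cG.eventually_lt_const ?_
    simp only [hG0]
    linarith
  have ev2 : ∀ᶠ p in 𝓝[s] ((0 : ℝ), a), ‖V p.1 p.2 - V p.1 a‖ < σ ^ 2 / 2 := by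
    refine cW.norm.eventually_lt_const ?_
    simpa using hs0
  obtain ⟨ε, hε, H⟩ := Metric.mem_nhdsWithin_iff.1 (ev1.and ev2)
  refine ⟨c, hc0, ε, hε, fun h hh hhε x hx => ?_⟩
  have := H (show (h, x) ∈ Metric.ball ((0 : ℝ), a) ε ∩ s from
    ⟨by
      rw [Metric.mem_ball, Prod.dist_eq, max_lt_iff, Real.dist_eq, Real.dist_eq]
      exact ⟨by simpa [abs_of_nonneg hh.1] using hhε, hx⟩, ⟨hh, trivial⟩⟩)
  exact ⟨this.2, this.1.le⟩

/-! ### Uniformity in `h` -/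

/-- The conclusion, once the eikonal and Riccati data are at hand uniformly in `h`. -/
lemma exists_modes {a ρ δ c : ℝ} (hρ0 : 0 < ρ) (hρ1 : ρ ≤ 1) (hδ : δ ≤ ρ / 2) (hc : 0 < c)
    {W : ℝ → ℝ → ℂ} {Q u : {h : ℝ // 0 < h ∧ h < δ} → ℝ → ℂ}
    (hu : Nice u) (hv : Nice (fun i x => (u i x)⁻¹)) (hne : ∀ i x, u i x ≠ 0)
    (huQ : ∀ i x, u i x * u i x = Q i x) (hQW : ∀ i x, |x - a| ≤ ρ → Q i x = W i.1 x)
    (hua : ∀ i, (u i a).re = 0) (hud : ∀ i x, |x - a| ≤ ρ → (deriv (u i) x).re ≤ -c) (n : ℕ) :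
    ∃ C > 0, ∀ h : ℝ, 0 < h → h < δ →
      ∃ f : ℝ → ℂ, ContDiff ℝ ∞ f ∧ HasCompactSupport f ∧ f ≠ 0 ∧
      √(∫ x, ‖-(h : ℂ) ^ 2 * deriv (deriv f) x + W h x * f x‖ ^ 2)
        ≤ C * h ^ n * √(∫ x, ‖f x‖ ^ 2) := by
  have hnorm : ∀ i : {h : ℝ // 0 < h ∧ h < δ}, ‖((i.1 : ℝ) : ℂ)‖ = i.1 := fun i => by
    rw [Complex.norm_real, Real.norm_of_nonneg i.2.1.le]
  have hle1 : ∀ i : {h : ℝ // 0 < h ∧ h < δ}, ‖((i.1 : ℝ) : ℂ)‖ ≤ 1 := fun i => by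
    rw [hnorm]; linarith [i.2.2]
  obtain ⟨D, S, hD, hS, hE⟩ := exists_riccati (fun i => ((i.1 : ℝ) : ℂ)) hle1 hu hv hne huQ n
  have hUn := hu.add (hD.smul hle1)
  obtain ⟨M, hM⟩ := hUn.bound
  obtain ⟨MD, hMD⟩ := hD.bound
  obtain ⟨R, hR⟩ := hS.bound
  -- the outer cutoff and bounds of its derivatives
  let b : ContDiffBump a := ⟨ρ / 2, ρ, by linarith, by linarith⟩
  let χ : ℝ → ℂ := fun x => (b x : ℂ)
  have hχs : ContDiff ℝ ∞ χ := Complex.ofRealCLM.contDiff.comp b.contDiff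
  have hχc : HasCompactSupport χ :=
    b.hasCompactSupport.comp_left (g := fun y : ℝ => (y : ℂ)) (by simp)
  have hχ1 : ∀ x, |x - a| ≤ ρ / 2 → χ x = 1 := fun x hx => by
    simp only [χ]
    rw [b.one_of_mem_closedBall (by simpa [Real.dist_eq] using hx), Complex.ofReal_one]
  have hχ0 : ∀ x, ρ ≤ |x - a| → χ x = 0 := fun x hx => by
    simp only [χ]
    rw [b.zero_of_le_dist (by simpa [Real.dist_eq] using hx), Complex.ofReal_zero]
  obtain ⟨K₁, hK₁⟩ := (hχc.deriv).exists_bound_of_continuous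
    (hχs.continuous_deriv (by exact_mod_cast le_top))
  obtain ⟨K₂, hK₂⟩ := (hχc.deriv.deriv).exists_bound_of_continuous
    ((contDiff_infty_iff_deriv.1 hχs).2.continuous_deriv (by exact_mod_cast le_top))
  set K := max K₁ K₂ with hK
  have hK0 : 0 ≤ K := ((norm_nonneg _).trans (hK₁ a)).trans (le_max_left _ _)
  set c' := c * ρ ^ 2 / 8 with hc'
  have hc'0 : 0 < c' := by positivity
  obtain ⟨T, hT0, hT⟩ := exp_neg_div_le (c := 2 * c') (by positivity) (2 * n + 1)
  -- the constant `L` absorbs the exponentially small part, `|R|` the Riccati residual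
  set L := (K + 2 * (K * M)) ^ 2 * Real.exp MD ^ 2 * T * Real.exp M ^ 2 with hL
  have hL0 : 0 ≤ L := by positivity
  refine ⟨2 * (1 + |R| + L), by positivity, fun h h0 hδh => ?_⟩
  let i : {h : ℝ // 0 < h ∧ h < δ} := ⟨h, h0, hδh⟩
  have hM0 : 0 ≤ M := (norm_nonneg _).trans (hM i a)
  have hMD0 : 0 ≤ MD := (norm_nonneg _).trans (hMD i a)
  have h1 : h ≤ 1 := by linarith
  let B := (K + 2 * (K * M)) * (Real.exp MD * Real.exp (-(c' / h)))
  let A := (1 + |R| + L) * h ^ n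
  have key := exists_mode (a := a) (ρ := ρ) (K := K) (M := M) (A := A) (B := B) (h := h)
    (W := W h) (χ := χ) (U := fun x => u i x + h * D i x) h0 (by linarith) hχs hχc hχ1 hχ0
    (fun x => (hK₁ x).trans (le_max_left _ _)) (fun x => (hK₂ x).trans (le_max_right _ _))
    (hUn.1 i) (hM i) ?_ ?_ ?_
  · rw [← mul_assoc] at key
    exact key
  · intro x hx
    have e := hE i x
    rw [hQW i x hx] at e
    change (h : ℂ) * deriv (fun y => u i y + h * D i y) x + (u i x + h * D i x) ^ 2 - W h x
      = (h : ℂ) ^ (n + 1) * S i x at e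
    rw [e, norm_mul, norm_pow, Complex.norm_real, Real.norm_of_nonneg h0.le]
    calc h ^ (n + 1) * ‖S i x‖ ≤ h ^ n * (1 + |R| + L) := by
          refine mul_le_mul (pow_le_pow_of_le_one h0.le h1 (by omega)) ?_ (norm_nonneg _)
            (by positivity)
          linarith [hR i x, le_abs_self R]
      _ = A := mul_comm _ _
  · intro x hx1 hx2
    refine mul_le_mul ?_ ?_ (norm_nonneg _) (by positivity)
    · have : h ^ 2 ≤ 1 := pow_le_one₀ h0.le h1
      have h3 : 0 ≤ K * M := by positivity
      nlinarith
    rw [Complex.norm_exp, ← Real.exp_add]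
    refine Real.exp_le_exp.2 ?_
    have iu : IntervalIntegrable (u i) volume a x := (hu.1 i).continuous.intervalIntegrable _ _
    have iD : IntervalIntegrable (fun t => (h : ℂ) * D i t) volume a x :=
      (continuous_const.mul (hD.1 i).continuous).intervalIntegrable _ _
    rw [intervalIntegral.integral_add iu iD, intervalIntegral.integral_const_mul, mul_add,
      ← mul_assoc, inv_mul_cancel₀ (by exact_mod_cast h0.ne'), one_mul, Complex.add_re,
      ← Complex.ofReal_inv, Complex.re_ofReal_mul]
    have p1 := re_phase_le (hu.1 i) (hua i) (hud i) hx2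
    have p2 : ‖∫ t in a..x, D i t‖ ≤ MD * |x - a| :=
      intervalIntegral.norm_integral_le_of_norm_le_const fun t _ => hMD i t
    have p3 := Complex.re_le_norm (∫ t in a..x, D i t)
    have p4 : (ρ / 2) ^ 2 ≤ (x - a) ^ 2 := by
      rw [← sq_abs (x - a)]
      exact pow_le_pow_left₀ (by positivity) hx1 2
    have p5 : (∫ t in a..x, u i t).re ≤ -c' := by
      rw [hc']
      nlinarith
    have p6 : h⁻¹ * (∫ t in a..x, u i t).re ≤ -(c' / h) := by
      have := mul_le_mul_of_nonneg_left p5 (inv_nonneg.2 h0.le)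
      calc _ ≤ _ := this
        _ = _ := by field_simp
    have p7 : MD * |x - a| ≤ MD := mul_le_of_le_one_right hMD0 (by linarith)
    linarith
  · -- the exponentially small part is negligible against the mass of `f`
    have t1 := hT h h0
    have e1 : Real.exp (-(c' / h)) ^ 2 = Real.exp (-(2 * c' / h)) := by
      rw [← Real.exp_nat_mul]; congr 1; push_cast; ring
    have e2 : Real.exp (-M) ^ 2 * Real.exp M ^ 2 = 1 := by
      rw [← mul_pow, ← Real.exp_add]; simp
    have hLs : L ≤ (1 + |R| + L) ^ 2 := by nlinarith [abs_nonneg R]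
    calc B ^ 2 * (2 * ρ)
        = (K + 2 * (K * M)) ^ 2 * Real.exp MD ^ 2 * Real.exp (-(2 * c' / h)) * (2 * ρ) := by
          rw [← e1]; simp only [B]; ring
      _ ≤ (K + 2 * (K * M)) ^ 2 * Real.exp MD ^ 2 * (T * h ^ (2 * n + 1)) * (2 * 1) := by gcongr
      _ = L * (h ^ n) ^ 2 * (2 * h * Real.exp (-M) ^ 2) := by
          rw [hL]
          linear_combination (-2 * (K + 2 * (K * M)) ^ 2 * Real.exp MD ^ 2 * T * h ^ (2 * n + 1)) * e2
      _ ≤ (1 + |R| + L) ^ 2 * (h ^ n) ^ 2 * (2 * h * Real.exp (-M) ^ 2) := by gcongr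
      _ = A ^ 2 * (2 * h * Real.exp (-M) ^ 2) := by simp only [A]; ring

end Pseudomode

open Pseudomode in
/-- Theorem 1 of the paper: semiclassical pseudomode construction.
For `H = -h² d²/dx² + V_h` with smooth potentials `V_h` depending continuously on
`h` together with all derivatives, and `z = η² + V_h(a)` with `η ≠ 0` real and
`Im V₀'(a) ≠ 0`, there are `δ > 0` and, for each `n > 0`, a constant `c_n > 0` and
`h`-dependent `f̃ ∈ C_c^∞(ℝ)` with `‖H f̃ - z f̃‖₂ ≤ c_n hⁿ ‖f̃‖₂` for `0 < h < δ`. -/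
theorem semiclassical_pseudomodes
    (h₁ : ℝ) (hh₁ : 0 < h₁) (V : ℝ → ℝ → ℂ)
    (hsmooth : ∀ h ∈ Icc (0:ℝ) h₁, ContDiff ℝ (⊤ : ℕ∞) (V h))
    (hcont : ∀ k : ℕ, ContinuousOn (fun p : ℝ × ℝ => iteratedDeriv k (V p.1) p.2)
      (Icc (0:ℝ) h₁ ×ˢ (univ : Set ℝ)))
    (a η : ℝ) (hη : η ≠ 0) (him : (deriv (V 0) a).im ≠ 0) :
    ∃ δ > 0, ∀ n : ℕ, 0 < n → ∃ c > 0, ∀ h : ℝ, 0 < h → h < δ →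
      ∃ f : ℝ → ℂ, ContDiff ℝ (⊤ : ℕ∞) f ∧ HasCompactSupport f ∧ f ≠ 0 ∧
        Real.sqrt (∫ x : ℝ, ‖-(h:ℂ)^2 * deriv (deriv f) x + V h x * f x
            - ((η:ℂ)^2 + V h a) * f x‖^2)
          ≤ c * h ^ n * Real.sqrt (∫ x : ℝ, ‖f x‖^2) := by
  -- choose the direction of propagation so that the mode decays on both sides of `a`
  obtain ⟨σ, hσ0, hσ2, hσim⟩ : ∃ σ : ℝ, σ ≠ 0 ∧ σ ^ 2 = η ^ 2 ∧ (deriv (V 0) a).im / σ < 0 := by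
    rcases lt_or_gt_of_ne (div_ne_zero him hη) with h | h
    · exact ⟨η, hη, rfl, h⟩
    · exact ⟨-η, neg_ne_zero.2 hη, by ring, by rw [div_neg]; linarith⟩
  have hσ2c : (σ : ℂ) ^ 2 = (η : ℂ) ^ 2 := by exact_mod_cast hσ2
  obtain ⟨c, hc, ε, hε, H⟩ := exists_nhds hh₁ hcont hσ0 hσim
  set ρ := min 1 (ε / 2) with hρ
  have hρ0 : 0 < ρ := by positivity
  have hρ1 : ρ ≤ 1 := min_le_left _ _
  have hρε : 2 * ρ ≤ ε := by linarith [min_le_right 1 (ε / 2)]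
  set δ := min h₁ (ρ / 2) with hδ
  have hδ0 : 0 < δ := by positivity
  have hδρ : δ ≤ ρ / 2 := min_le_right _ _
  have hι : ∀ i : {h : ℝ // 0 < h ∧ h < δ}, i.1 ∈ Icc (0 : ℝ) h₁ := fun i =>
    ⟨i.2.1.le, i.2.2.le.trans (min_le_left _ _)⟩
  have hιε : ∀ i : {h : ℝ // 0 < h ∧ h < δ}, i.1 < ε := fun i => by linarith [i.2.2]
  -- the potential is localized by an inner cutoff, so that all quantities are defined on `ℝ`
  let b : ContDiffBump a := ⟨3 / 2 * ρ, 2 * ρ, by linarith, by linarith⟩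
  let χ : ℝ → ℂ := fun x => (b x : ℂ)
  have hχs : ContDiff ℝ ∞ χ := Complex.ofRealCLM.contDiff.comp b.contDiff
  have hχc : HasCompactSupport χ :=
    b.hasCompactSupport.comp_left (g := fun y : ℝ => (y : ℂ)) (by simp)
  have hχ1 : ∀ x, |x - a| ≤ 3 / 2 * ρ → χ x = 1 := fun x hx => by
    simp only [χ]
    rw [b.one_of_mem_closedBall (by simpa [Real.dist_eq] using hx), Complex.ofReal_one]
  have hχ0 : ∀ x, 2 * ρ ≤ |x - a| → χ x = 0 := fun x hx => by
    simp only [χ]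
    rw [b.zero_of_le_dist (by simpa [Real.dist_eq] using hx), Complex.ofReal_zero]
  have hχle : ∀ x, ‖χ x‖ ≤ 1 := fun x => by
    simp only [χ]
    rw [Complex.norm_real, Real.norm_of_nonneg b.nonneg]
    exact b.le_one
  have hVb : ∀ k (s : Set ℝ), IsCompact s → ∃ C : ℝ, ∀ i : {h : ℝ // 0 < h ∧ h < δ}, ∀ x ∈ s,
      ‖iteratedDeriv k (V i.1) x‖ ≤ C := by
    intro k s hs
    obtain ⟨C, hC⟩ := ((isCompact_Icc (a := (0 : ℝ)) (b := h₁)).prod hs).exists_bound_of_continuousOn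
      ((hcont k).mono (prod_mono le_rfl (subset_univ _)))
    exact ⟨C, fun i x hx => hC (i.1, x) ⟨hι i, hx⟩⟩
  obtain ⟨Ca, hCa⟩ := hVb 0 {a} isCompact_singleton
  let w : {h : ℝ // 0 < h ∧ h < δ} → ℝ → ℂ := fun i x => χ x * (V i.1 x + -V i.1 a)
  have hw : Nice w := by
    have n1 : Nice (fun (i : {h : ℝ // 0 < h ∧ h < δ}) x => χ x * V i.1 x) :=
      nice_cutoff (fun i => hsmooth _ (hι i)) hχs hχc fun k => hVb k _ hχc.isCompact
    have n2 : Nice (fun (_ : {h : ℝ // 0 < h ∧ h < δ}) x => χ x * 1) := by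
      refine nice_cutoff (fun _ => contDiff_const) hχs hχc fun k => ?_
      obtain ⟨C, hC⟩ := (nice_const (ι := {h : ℝ // 0 < h ∧ h < δ}) (c := fun _ => 1) (C := 1)
        (by simp)).2 k k le_rfl
      exact ⟨C, fun i x _ => hC i x⟩
    have n3 := n1.add (n2.smul (c := fun i => -V i.1 a) (C := Ca) fun i => by
      simpa using hCa i a rfl)
    convert n3 using 3
    simp only [w]; ring
  have hw1 : ∀ i x, |x - a| ≤ 3 / 2 * ρ → w i x = V i.1 x - V i.1 a := fun i x hx => by
    simp only [w]; rw [hχ1 x hx]; ring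
  have hwlt : ∀ i x, ‖w i x‖ < σ ^ 2 / 2 := by
    intro i x
    rcases lt_or_ge |x - a| (2 * ρ) with hx | hx
    · have h1 := (H i.1 (hι i) (hιε i) x (by linarith)).1
      refine lt_of_le_of_lt ?_ h1
      simp only [w]
      rw [norm_mul, ← sub_eq_add_neg]
      exact mul_le_of_le_one_left (norm_nonneg _) (hχle x)
    · simp only [w]
      rw [hχ0 x hx, zero_mul, norm_zero]
      positivity
  let u : {h : ℝ // 0 < h ∧ h < δ} → ℝ → ℂ := fun i x => root σ (w i x)
  let Q : {h : ℝ // 0 < h ∧ h < δ} → ℝ → ℂ := fun i x => w i x + -(σ : ℂ) ^ 2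
  have hQ : Nice Q := hw.add (nice_const (c := fun _ => -(σ : ℂ) ^ 2) fun _ => le_rfl)
  have hus : ∀ i, ContDiff ℝ ∞ (u i) := fun i => contDiff_iff_contDiffAt.2 fun x =>
    (contDiffAt_root hσ0 (hwlt i x)).comp x (hw.1 i).contDiffAt
  have huQ : ∀ i x, u i x * u i x = Q i x := fun i x => by
    simp only [u, Q]
    rw [root_mul_self hσ0 (hwlt i x), sub_eq_add_neg]
  have hm : 0 < √(σ ^ 2 / 2) := Real.sqrt_pos.2 (by positivity)
  have hmu : ∀ i x, √(σ ^ 2 / 2) ≤ ‖u i x‖ := fun i x => root_norm hσ0 (hwlt i x)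
  have hne : ∀ i x, u i x ≠ 0 := fun i x => norm_pos_iff.1 (hm.trans_le (hmu i x))
  obtain ⟨hu, hv⟩ := nice_root hQ hus huQ hm hmu
  have hud : ∀ i x, |x - a| ≤ ρ → (deriv (u i) x).re ≤ -c := by
    intro i x hx
    have h2 := (H i.1 (hι i) (hιε i) x (by linarith)).2
    rw [← hw1 i x (by linarith)] at h2
    have hdu : HasDerivAt (u i) (deriv (u i) x) x :=
      ((hus i).differentiable (by simp) x).hasDerivAt
    have hdQ := hdu.mul hdu
    rw [show u i * u i = Q i from funext (huQ i)] at hdQ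
    -- the inner cutoff is `1` near `x`, so `Q` and `V` have the same derivative there
    have hev : Q i =ᶠ[𝓝 x] fun y => V i.1 y + (-V i.1 a + -(σ : ℂ) ^ 2) := by
      have : ∀ᶠ y in 𝓝 x, |y - a| < 3 / 2 * ρ :=
        (isOpen_lt (by fun_prop) continuous_const).mem_nhds (show |x - a| < 3 / 2 * ρ by linarith)
      filter_upwards [this] with y hy
      simp only [Q]
      rw [hw1 i y hy.le]; ring
    have e1 : deriv (V i.1) x = deriv (u i) x * u i x + u i x * deriv (u i) x := by
      rw [← hdQ.deriv, hev.deriv_eq, deriv_add_const]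
    have e2 : deriv (u i) x = deriv (V i.1) x / (2 * root σ (w i x)) := by
      change _ = _ / (2 * u i x)
      rw [e1]
      have := hne i x
      field_simp
      ring
    rw [e2]
    exact h2
  refine ⟨δ, hδ0, fun n _ => ?_⟩
  obtain ⟨C, hC, hmodes⟩ := exists_modes (W := fun h x => V h x - ((η : ℂ) ^ 2 + V h a))
    hρ0 hρ1 hδρ hc hu hv hne huQ
    (fun i x hx => by simp only [Q]; rw [hw1 i x (by linarith), hσ2c]; ring)
    (fun i => by simp only [u]; rw [hw1 i a (by rw [sub_self, abs_zero]; positivity)]; simp [root_zero])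
    hud n
  refine ⟨C, hC, fun h h0 hhδ => ?_⟩
  obtain ⟨f, f1, f2, f3, f4⟩ := hmodes h h0 hhδ
  refine ⟨f, f1, f2, f3, ?_⟩
  convert f4 using 7
  ring
end

section
/- Under the hypotheses of Theorem 1 (H = −h²d²/dx² + V_h, z = η² + V_h(a), η ≠ 0 real, Im V₀′(a) ≠ 0), for every n > 0 one has ‖(H − zI)^{-1}‖ ≥ c_n^{-1} h^{-n} whenever z ∉ Spec(H) and 0 < h < δ; hence ‖(H − zI)^{-1}‖ diverges as h → 0 faster than any negative power of h. -/
open Set MeasureTheory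

/-!
The resolvent is large because `H - z` has approximate null vectors. In the variable `s = x - a`,
with `v s = V h (a + s) - V h a`, one looks for them in the WKB form `f = χ exp (h⁻¹ ∫₀ˢ u)`, with
`χ` a cutoff near `0`. Away from the support of `χ'`, `(H - z) f = 0` is the Riccati equation
`h u' + u² = κ² + v`, `κ = iη`.

Rather than expanding `u` in powers of `h`, the equation is solved by iteration in a filtration: `s`
has weight `1` and `h` weight `2`, so that weight `k` means size `√(s² + h) ^ k`, with each
derivative costing one (`IsOrd`). Starting from `u = κ + v / (2κ)`, the correction
`u ↦ u - E / (2κ)`, where `E` is the error, raises the weight of the error by one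
(`exists_riccati`). All constants are uniform in `h` because the derivatives of `V` are bounded on
compact sets.

Every iterate satisfies `u = κ + v / (2κ) + O(s² + h)`, hence
`Re ∫₀ˢ u ≤ Im (V h)'(a) s² / (4η) + O(|s|³ + h |s|)`. Since `z` only involves `η²`, the sign of `η`
can be chosen so that the quadratic term is negative; then `|exp (h⁻¹ ∫₀ˢ u)| ≤ C exp (-β s² / h)` on
a small interval. This Gaussian turns an error `√(s² + h) ^ (2n)` into `O(hⁿ)`, and it also controls
the cutoff terms, on whose support the weight is bounded below (`exists_quasimode`).

Finally `|f|` is bounded below on an interval of length comparable to `h`, so `‖f‖ ≥ c h` while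
`‖(H - z) f‖ ≤ C h ^ (n + 1)`, and `‖f‖ ≤ ‖R‖ ‖(H - z) f‖`.
-/

/-! ### Weights and the Riccati equation -/

/-- `IsOrd r k g`: the family `g i` is smooth and of weight at least `k` near `0`, uniformly in `i`,
where `s` has weight `1` and the parameter `r i` has weight `2`. The weight `k` is measured by
`√(s² + r i) ^ k` on `|s| ≤ 1/2`, and each derivative lowers it by at most one
(`k - j` is truncated on purpose: the weight never becomes negative). -/
def IsOrd {ι : Type*} (r : ι → ℝ) (k : ℕ) (g : ι → ℝ → ℂ) : Prop :=
  (∀ i, ContDiff ℝ (⊤ : ℕ∞) (g i)) ∧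
    ∀ j : ℕ, ∃ C : ℝ, ∀ i s, |s| ≤ 1 / 2 →
      ‖iteratedDeriv j (g i) s‖ ≤ C * √(s ^ 2 + r i) ^ (k - j)

section Order

variable {ι : Type*} {r : ι → ℝ}

lemma weight_le_one (hr : ∀ i, 0 < r i ∧ r i ≤ 1 / 2) (i : ι) {s : ℝ} (hs : |s| ≤ 1 / 2) :
    √(s ^ 2 + r i) ≤ 1 := by
  refine Real.sqrt_le_one.mpr ?_
  have := (sq_le_sq' (abs_le.1 hs).1 (abs_le.1 hs).2)
  linarith [(hr i).2]

lemma IsOrd.exists_nonneg {k : ℕ} {g : ι → ℝ → ℂ} (hg : IsOrd r k g) (j : ℕ) :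
    ∃ C : ℝ, 0 ≤ C ∧ ∀ i s, |s| ≤ 1 / 2 →
      ‖iteratedDeriv j (g i) s‖ ≤ C * √(s ^ 2 + r i) ^ (k - j) := by
  obtain ⟨C, hC⟩ := hg.2 j
  refine ⟨|C|, abs_nonneg _, fun i s hs => (hC i s hs).trans ?_⟩
  gcongr
  exact le_abs_self C

lemma IsOrd.mono (hr : ∀ i, 0 < r i ∧ r i ≤ 1 / 2) {k l : ℕ} {g : ι → ℝ → ℂ} (hg : IsOrd r l g)
    (hkl : k ≤ l) : IsOrd r k g := by
  refine ⟨hg.1, fun j => ?_⟩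
  obtain ⟨C, hC0, hC⟩ := hg.exists_nonneg j
  refine ⟨C, fun i s hs => (hC i s hs).trans ?_⟩
  gcongr C * ?_
  exact pow_le_pow_of_le_one (Real.sqrt_nonneg _) (weight_le_one hr i hs) (by omega)

lemma IsOrd.add {k : ℕ} {f g : ι → ℝ → ℂ} (hf : IsOrd r k f) (hg : IsOrd r k g) :
    IsOrd r k (fun i s => f i s + g i s) := by
  refine ⟨fun i => (hf.1 i).add (hg.1 i), fun j => ?_⟩
  obtain ⟨C, hC⟩ := hf.2 j
  obtain ⟨D, hD⟩ := hg.2 j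
  refine ⟨C + D, fun i s hs => ?_⟩
  rw [iteratedDeriv_fun_add ((hf.1 i).contDiffAt.of_le (by exact_mod_cast le_top))
    ((hg.1 i).contDiffAt.of_le (by exact_mod_cast le_top)), add_mul]
  exact (norm_add_le _ _).trans (add_le_add (hC i s hs) (hD i s hs))

lemma IsOrd.mul (hr : ∀ i, 0 < r i ∧ r i ≤ 1 / 2) {k l : ℕ} {f g : ι → ℝ → ℂ}
    (hf : IsOrd r k f) (hg : IsOrd r l g) : IsOrd r (k + l) (fun i s => f i s * g i s) := by
  refine ⟨fun i => (hf.1 i).mul (hg.1 i), fun j => ?_⟩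
  choose C hC0 hC using hf.exists_nonneg
  choose D hD0 hD using hg.exists_nonneg
  refine ⟨∑ m ∈ Finset.range (j + 1), (j.choose m : ℝ) * C m * D (j - m), fun i s hs => ?_⟩
  rw [iteratedDeriv_fun_mul ((hf.1 i).contDiffAt.of_le (by exact_mod_cast le_top))
    ((hg.1 i).contDiffAt.of_le (by exact_mod_cast le_top)), Finset.sum_mul]
  refine (norm_sum_le _ _).trans (Finset.sum_le_sum fun m hm => ?_)
  have hm' : m ≤ j := by simpa [Nat.lt_succ_iff] using hm
  rw [norm_mul, norm_mul, Complex.norm_natCast]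
  calc _ ≤ (j.choose m : ℝ) * (C m * √(s ^ 2 + r i) ^ (k - m)) *
        (D (j - m) * √(s ^ 2 + r i) ^ (l - (j - m))) := by
        gcongr
        · exact mul_nonneg (Nat.cast_nonneg _) (mul_nonneg (hC0 m) (by positivity))
        · exact hC m i s hs
        · exact hD (j - m) i s hs
    _ = (j.choose m : ℝ) * C m * D (j - m) * √(s ^ 2 + r i) ^ ((k - m) + (l - (j - m))) := by
        rw [pow_add]; ring
    _ ≤ _ := by
        have := hC0 m
        have := hD0 (j - m)
        gcongr _ * ?_
        exact pow_le_pow_of_le_one (Real.sqrt_nonneg _) (weight_le_one hr i hs) (by omega)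

lemma IsOrd.deriv {k : ℕ} {g : ι → ℝ → ℂ} (hg : IsOrd r k g) :
    IsOrd r (k - 1) (fun i => deriv (g i)) := by
  refine ⟨fun i => (contDiff_infty_iff_deriv.1 (hg.1 i)).2, fun j => ?_⟩
  obtain ⟨C, hC⟩ := hg.2 (j + 1)
  refine ⟨C, fun i s hs => ?_⟩
  rw [← iteratedDeriv_succ', show k - 1 - j = k - (j + 1) by omega]
  exact hC i s hs

lemma isOrd_const (c : ℂ) : IsOrd r 0 (fun _ _ => c) := by
  refine ⟨fun _ => contDiff_const, fun j => ⟨‖c‖, fun i s _ => ?_⟩⟩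
  rw [iteratedDeriv_const]
  split_ifs <;> simp

lemma isOrd_param (hr : ∀ i, 0 < r i ∧ r i ≤ 1 / 2) : IsOrd r 2 (fun i _ => (r i : ℂ)) := by
  refine ⟨fun _ => contDiff_const, fun j => ⟨1, fun i s _ => ?_⟩⟩
  rw [iteratedDeriv_const]
  split_ifs with h
  · have : 0 ≤ s ^ 2 + r i := add_nonneg (sq_nonneg s) (hr i).1.le
    simp only [h, Nat.sub_zero, Complex.norm_real, Real.norm_eq_abs, one_mul, Real.sq_sqrt this]
    rw [abs_of_pos (hr i).1]
    nlinarith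
  · rw [norm_zero]; positivity

lemma IsOrd.const_mul (hr : ∀ i, 0 < r i ∧ r i ≤ 1 / 2) {k : ℕ} {g : ι → ℝ → ℂ}
    (hg : IsOrd r k g) (c : ℂ) : IsOrd r k (fun i s => c * g i s) := by
  simpa using (isOrd_const c).mul hr hg

/-- Approximate solutions of the Riccati equation `r u' + u² = κ² + v` to arbitrary weight. Replacing
`u` by `u - E / (2κ)`, with `E` the current error, raises the weight of the error by one: the new
error is a combination of `(u - κ) E`, `r E'` and `E²`, and `u - κ` has weight `1`. -/
lemma exists_riccati (hr : ∀ i, 0 < r i ∧ r i ≤ 1 / 2) {v : ι → ℝ → ℂ} (hv : IsOrd r 1 v)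
    {κ : ℂ} (hκ : κ ≠ 0) (N : ℕ) :
    ∃ u E : ι → ℝ → ℂ, (∀ i, ContDiff ℝ (⊤ : ℕ∞) (u i)) ∧ IsOrd r (N + 2) E ∧
      IsOrd r 2 (fun i s => u i s - κ - v i s / (2 * κ)) ∧
      ∀ i s, (r i : ℂ) * deriv (u i) s + u i s ^ 2 = κ ^ 2 + v i s + E i s := by
  induction N with
  | zero =>
    refine ⟨fun i s => κ + (2 * κ)⁻¹ * v i s, fun i s => (2 * κ)⁻¹ * ((r i : ℂ) * deriv (v i) s)
      + ((2 * κ)⁻¹) ^ 2 * (v i s * v i s), fun i => contDiff_const.add (contDiff_const.mul (hv.1 i)),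
      ?_, ?_, fun i s => ?_⟩
    · exact (((isOrd_param hr).mul hr hv.deriv).const_mul hr _).add ((hv.mul hr hv).const_mul hr _)
    · convert ((isOrd_const (r := r) 0).mul hr (isOrd_param hr)) using 3
      field_simp
      ring
    · have hd : DifferentiableAt ℝ (v i) s := (hv.1 i).differentiable (by simp) s
      rw [deriv_const_add, deriv_const_mul _ hd]
      field_simp
      ring
  | succ N ih =>
    obtain ⟨u, E, hu, hE, hq, heq⟩ := ih
    have hq1 : IsOrd r 1 (fun i s => u i s - κ) := by
      convert (hq.mono hr one_le_two).add (hv.const_mul hr (2 * κ)⁻¹) using 3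
      field_simp
      ring
    refine ⟨fun i s => u i s + (-(2 * κ)⁻¹) * E i s, fun i s =>
      (-κ⁻¹) * ((u i s - κ) * E i s) + (-(2 * κ)⁻¹) * ((r i : ℂ) * deriv (E i) s)
      + ((2 * κ)⁻¹) ^ 2 * (E i s * E i s),
      fun i => (hu i).add (contDiff_const.mul (hE.1 i)), ?_, ?_, fun i s => ?_⟩
    · refine ((?_ : IsOrd r (N + 1 + 2) _).add ?_).add ?_
      · exact ((hq1.mul hr hE).mono hr (by omega)).const_mul hr _
      · exact (((isOrd_param hr).mul hr hE.deriv).mono hr (by omega)).const_mul hr _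
      · exact ((hE.mul hr hE).mono hr (by omega)).const_mul hr _
    · convert hq.add ((hE.mono hr (by omega : 2 ≤ N + 2)).const_mul hr (-(2 * κ)⁻¹)) using 3
      ring
    · have hd : DifferentiableAt ℝ (E i) s := (hE.1 i).differentiable (by simp) s
      have hd' : DifferentiableAt ℝ (u i) s := (hu i).differentiable (by simp) s
      have h0 := heq i s
      rw [deriv_fun_add hd' (hd.const_mul _), deriv_const_mul _ hd]
      have h1 : u i s ^ 2 = κ ^ 2 + v i s + E i s - (r i : ℂ) * deriv (u i) s := by
        rw [← h0]; ring
      have : (u i s + -(2 * κ)⁻¹ * E i s) ^ 2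
          = u i s ^ 2 - κ⁻¹ * u i s * E i s + ((2 * κ)⁻¹) ^ 2 * (E i s * E i s) := by
        field_simp
        ring
      rw [this, h1]
      field_simp
      ring

end Order

/-! ### Ingredients of the WKB estimate -/

/-- Integrated form of a one-sided derivative bound, on both sides of `0` at once. -/
lemma le_of_mul_deriv_le {p p' : ℝ → ℝ} {ε b D : ℝ} (hp : ∀ s, HasDerivAt p (p' s) s)
    (h0 : p 0 = 0) (h : ∀ s, |s| ≤ ε → s * p' s ≤ -b * s ^ 2 + D * |s|) {s : ℝ} (hs : |s| ≤ ε) :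
    p s ≤ -(b / 2) * s ^ 2 + D * |s| := by
  have key : ∀ q q' : ℝ → ℝ, (∀ s, HasDerivAt q (q' s) s) → q 0 = 0 →
      (∀ s, |s| ≤ ε → s * q' s ≤ -b * s ^ 2 + D * |s|) → ∀ s, 0 ≤ s → s ≤ ε →
      q s ≤ -(b / 2) * s ^ 2 + D * s := by
    intro q q' hq hq0 hqb s hs0 hsε
    have hd : ∀ t, HasDerivAt (fun t => q t + b / 2 * t ^ 2 - D * t) (q' t + b * t - D) t := by
      intro t
      refine (((hq t).add ((hasDerivAt_pow 2 t).const_mul (b / 2))).sub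
        ((hasDerivAt_id t).const_mul D)).congr_deriv ?_
      push_cast; ring
    have hanti : AntitoneOn (fun t => q t + b / 2 * t ^ 2 - D * t) (Icc 0 ε) := by
      refine antitoneOn_of_deriv_nonpos (convex_Icc _ _)
        (fun t _ => (hd t).continuousAt.continuousWithinAt)
        (fun t _ => (hd t).differentiableAt.differentiableWithinAt) fun t ht => ?_
      rw [interior_Icc] at ht
      rw [(hd t).deriv]
      have h1 := hqb t (by rw [abs_of_pos ht.1]; exact ht.2.le)
      rw [abs_of_pos ht.1] at h1
      have h2 : t * (q' t + b * t - D) ≤ 0 := by linarith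
      exact nonpos_of_mul_nonpos_right h2 ht.1
    have := hanti ⟨le_rfl, hs0.trans hsε⟩ ⟨hs0, hsε⟩ hs0
    simp only [hq0] at this
    linarith
  rcases le_total 0 s with hs0 | hs0
  · rw [abs_of_nonneg hs0] at hs ⊢
    exact key p p' hp h0 h s hs0 hs
  · rw [abs_of_nonpos hs0] at hs ⊢
    have := key (fun t => p (-t)) (fun t => -p' (-t)) (fun t =>
      ((hp (-t)).comp t (hasDerivAt_neg t)).congr_deriv (by simp)) (by simpa using h0) (fun t ht => by
      have := h (-t) (by simpa using ht)
      simp only [abs_neg, even_two, Even.neg_pow] at this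
      linarith) (-s) (by linarith) hs
    simpa using this

lemma exists_cutoff {ε : ℝ} (hε : 0 < ε) :
    ∃ χ : ℝ → ℂ, ContDiff ℝ (⊤ : ℕ∞) χ ∧ (∀ s, ε ≤ |s| → χ s = 0) ∧
      (∀ s, |s| ≤ ε / 2 → χ s = 1) ∧
      (∀ s, |s| < ε / 2 → deriv χ s = 0 ∧ deriv (deriv χ) s = 0) ∧
      ∃ X : ℝ, 0 ≤ X ∧ ∀ s, ‖χ s‖ ≤ X ∧ ‖deriv χ s‖ ≤ X ∧ ‖deriv (deriv χ) s‖ ≤ X := by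
  let B : ContDiffBump (0 : ℝ) := ⟨ε / 2, ε, by linarith, by linarith⟩
  let χ : ℝ → ℂ := fun s => ((B s : ℝ) : ℂ)
  have hsm : ContDiff ℝ (⊤ : ℕ∞) χ := Complex.ofRealCLM.contDiff.comp B.contDiff
  have hcs : HasCompactSupport χ := B.hasCompactSupport.comp_left (g := fun x : ℝ => (x : ℂ)) rfl
  have hsm1 := (contDiff_infty_iff_deriv.1 hsm).2
  have hsm2 := (contDiff_infty_iff_deriv.1 hsm1).2
  obtain ⟨X0, h0⟩ := hcs.exists_bound_of_continuous hsm.continuous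
  obtain ⟨X1, h1⟩ := hcs.deriv.exists_bound_of_continuous hsm1.continuous
  obtain ⟨X2, h2⟩ := hcs.deriv.deriv.exists_bound_of_continuous hsm2.continuous
  refine ⟨χ, hsm, fun s hs => ?_, fun s hs => ?_, fun s hs => ?_, |X0| + |X1| + |X2|,
    by positivity, fun s => ?_⟩
  · have : B s = 0 := B.zero_of_le_dist (by simpa [Real.dist_eq, B] using hs)
    simp [χ, this]
  · have : B s = 1 := B.one_of_mem_closedBall (by simpa [Real.dist_eq, B] using hs)
    simp [χ, this]
  · have hB := B.eventuallyEq_one_of_mem_ball (x := s) (by simpa [Real.dist_eq, B] using hs)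
    have hχ : χ =ᶠ[nhds s] fun _ => 1 := by
      filter_upwards [hB] with t ht
      simp [χ, ht]
    have hχ' : deriv χ =ᶠ[nhds s] fun _ => 0 := by
      simpa using hχ.deriv
    exact ⟨hχ'.eq_of_nhds, by simpa using hχ'.deriv_eq⟩
  · have := abs_nonneg X0
    have := abs_nonneg X1
    have := abs_nonneg X2
    refine ⟨(h0 s).trans ?_, (h1 s).trans ?_, (h2 s).trans ?_⟩
    · linarith [le_abs_self X0]
    · linarith [le_abs_self X1]
    · linarith [le_abs_self X2]

/-- The weight is absorbed by the Gaussian decay, at the price of a constant: this is where powers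
of `|s|` are traded for powers of `√h`. -/
lemma weight_mul_exp_le {β : ℝ} (hβ : 0 < β) (n : ℕ) :
    ∃ C : ℝ, 0 < C ∧ ∀ h s : ℝ, 0 < h →
      √(s ^ 2 + h) ^ (2 * n) * Real.exp (-β * s ^ 2 / h) ≤ C * h ^ n := by
  refine ⟨n.factorial / β ^ n * Real.exp β, by positivity, fun h s hh => ?_⟩
  have h1 : √(s ^ 2 + h) ^ (2 * n) = (s ^ 2 + h) ^ n := by
    rw [pow_mul, Real.sq_sqrt (by positivity)]
  have h2 := Real.pow_div_factorial_le_exp (β * (s ^ 2 / h + 1)) (by positivity) n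
  have h3 : Real.exp β * 1 = Real.exp (β * (s ^ 2 / h + 1)) * Real.exp (-β * s ^ 2 / h) := by
    rw [mul_one, ← Real.exp_add]
    congr 1
    ring
  have h4 : (s ^ 2 + h) ^ n =
      (β * (s ^ 2 / h + 1)) ^ n / n.factorial * (n.factorial / β ^ n * h ^ n) := by
    have : s ^ 2 + h = (s ^ 2 / h + 1) * h := by field_simp
    rw [this, mul_pow, mul_pow]
    field_simp
  rw [h1, h4]
  calc _ ≤ Real.exp (β * (s ^ 2 / h + 1)) * (n.factorial / β ^ n * h ^ n)
        * Real.exp (-β * s ^ 2 / h) := by gcongr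
    _ = n.factorial / β ^ n * h ^ n *
        (Real.exp (β * (s ^ 2 / h + 1)) * Real.exp (-β * s ^ 2 / h)) := by ring
    _ = _ := by rw [← h3]; ring

/-- For `χ = 1` the bracket reduces to the Riccati expression `-(h u' + u²)`. -/
lemma deriv_deriv_wkb {χ u ψ : ℝ → ℂ} {h : ℝ} (hh : h ≠ 0) (hχ : ContDiff ℝ (⊤ : ℕ∞) χ)
    (hu : ContDiff ℝ (⊤ : ℕ∞) u) (hψ : ∀ s, HasDerivAt ψ (u s / h) s) (s : ℝ) :
    -(h : ℂ) ^ 2 * deriv (deriv fun s => χ s * Complex.exp (ψ s)) s =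
      (-(h : ℂ) ^ 2 * deriv (deriv χ) s - 2 * h * deriv χ s * u s
        - χ s * (h * deriv u s + u s ^ 2)) * Complex.exp (ψ s) := by
  have hh' : (h : ℂ) ≠ 0 := by exact_mod_cast hh
  have hχ1 := (contDiff_infty_iff_deriv.1 hχ).2
  have dχ : ∀ s, HasDerivAt χ (deriv χ s) s := fun s =>
    (hχ.differentiable (by simp) s).hasDerivAt
  have dχ1 : ∀ s, HasDerivAt (deriv χ) (deriv (deriv χ) s) s := fun s =>
    (hχ1.differentiable (by simp) s).hasDerivAt
  have du : ∀ s, HasDerivAt u (deriv u s) s := fun s =>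
    (hu.differentiable (by simp) s).hasDerivAt
  have d1 : (deriv fun s => χ s * Complex.exp (ψ s)) =
      fun s => deriv χ s * Complex.exp (ψ s) + χ s * (Complex.exp (ψ s) * (u s / h)) :=
    funext fun s => ((dχ s).mul (hψ s).cexp).deriv
  have d2 := ((dχ1 s).mul (hψ s).cexp).add
    ((dχ s).mul ((hψ s).cexp.mul ((du s).div_const (h : ℂ))))
  -- `d2` is about a product of functions, definitionally the one in the goal.
  rw [d1]
  erw [d2.deriv]
  simp only [Pi.mul_apply]
  field_simp
  ring

/-! ### Quasimodes -/

section Quasimode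

variable {ι : Type*} {r : ι → ℝ}

/-- A second order Taylor bound, uniform in the family. -/
lemma taylor_of_isOrd {v : ι → ℝ → ℂ} (hv : IsOrd r 1 v)
    (hv0 : ∀ i, v i 0 = 0) :
    ∃ C : ℝ, 0 ≤ C ∧ ∀ i s, |s| ≤ 1 / 2 → ‖v i s - deriv (v i) 0 * s‖ ≤ C * s ^ 2 := by
  obtain ⟨C, hC0, hC⟩ := hv.exists_nonneg 2
  refine ⟨C, hC0, fun i s hs => ?_⟩
  have hsm1 := (contDiff_infty_iff_deriv.1 (hv.1 i)).2
  have h1 : ∀ t ∈ Icc (-|s|) |s|, ‖deriv (v i) t - deriv (v i) 0‖ ≤ C * |s| := by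
    intro t ht
    have ht' : |t| ≤ |s| := abs_le.2 ht
    have := (convex_Icc (-|s|) |s|).norm_image_sub_le_of_norm_deriv_le (f := deriv (v i))
      (C := C) (x := 0) (y := t) (fun x _ => hsm1.differentiable (by simp) x)
      (fun x hx => by
        have := hC i x ((abs_le.2 hx).trans hs)
        simpa [iteratedDeriv_succ'] using this) (by simp) ht
    refine this.trans ?_
    rw [sub_zero, Real.norm_eq_abs]
    gcongr
  have hd : ∀ t, HasDerivAt (fun t : ℝ => v i t - deriv (v i) 0 * t)
      (deriv (v i) t - deriv (v i) 0) t := fun t =>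
    ((((hv.1 i).differentiable (by simp) t).hasDerivAt).sub
      ((Complex.ofRealCLM.hasDerivAt (x := t)).const_mul (deriv (v i) 0))).congr_deriv (by simp)
  have := (convex_Icc (-|s|) |s|).norm_image_sub_le_of_norm_deriv_le
      (f := fun t : ℝ => v i t - deriv (v i) 0 * t)
      (C := C * |s|) (x := 0) (y := s) (fun x _ => (hd x).differentiableAt)
      (fun x hx => by rw [(hd x).deriv]; exact h1 x hx) (by simp) ⟨neg_abs_le s, le_abs_self s⟩
  simp only [hv0, Complex.ofReal_zero, mul_zero, sub_zero, Real.norm_eq_abs] at this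
  rwa [mul_assoc, abs_mul_abs_self, ← sq] at this

/-- Quasimodes of arbitrary order for `-r² d²/ds² + v - η²`, centred at `0`, in pointwise form. The
interval `|s| ≤ ε` depends on the order, but not on the parameter. -/
lemma exists_quasimode (hr : ∀ i, 0 < r i ∧ r i ≤ 1 / 2) {v : ι → ℝ → ℂ} (hv : IsOrd r 1 v)
    (hv0 : ∀ i, v i 0 = 0) {η b : ℝ} (hη : η ≠ 0) (hb : 0 < b)
    (him : ∀ i, (deriv (v i) 0).im / (2 * η) ≤ -b) (n : ℕ) :
    ∃ ε t c C : ℝ, 0 < ε ∧ 0 < t ∧ 0 < c ∧ 0 < C ∧ ∀ i, ∃ f : ℝ → ℂ,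
      ContDiff ℝ (⊤ : ℕ∞) f ∧ (∀ s, ε ≤ |s| → f s = 0) ∧
      (∀ s, |s| ≤ t * r i → c ≤ ‖f s‖) ∧
      ∀ s, |s| ≤ ε →
        ‖-(r i : ℂ) ^ 2 * deriv (deriv f) s + (v i s - (η : ℂ) ^ 2) * f s‖ ≤ C * r i ^ n := by
  set κ : ℂ := Complex.I * η with hκd
  have hκ : κ ≠ 0 := by simp [κ, hη]
  have hκ2 : κ ^ 2 = -(η : ℂ) ^ 2 := by rw [hκd, mul_pow, Complex.I_sq]; ring
  obtain ⟨u, E, hu, hE, hq, heq⟩ := exists_riccati hr hv hκ (2 * n)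
  have hE' : IsOrd r (2 * n) E := hE.mono hr (by omega)
  obtain ⟨K, hK0, hK⟩ := taylor_of_isOrd hv hv0
  obtain ⟨Q, hQ0, hQ⟩ := hq.exists_nonneg 0
  obtain ⟨Y, hY0, hY⟩ := hE'.exists_nonneg 0
  have hu0 : IsOrd r 0 u := by
    convert ((hq.mono hr (by omega)).add (isOrd_const κ)).add
      ((hv.mono hr zero_le_one).const_mul hr (2 * κ)⁻¹) using 3
    field_simp
    ring
  obtain ⟨U, hU0, hU⟩ := hu0.exists_nonneg 0
  simp only [iteratedDeriv_zero, Nat.sub_zero] at hQ hY hU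
  simp only [pow_zero, mul_one] at hU
  set A : ℝ := K / (2 * |η|) + Q with hA
  have hA0 : 0 ≤ A := by positivity
  -- `Re u = Im v / (2η) + O(s² + r)`, and `Im v` is linear to first order.
  have hre : ∀ i s, |s| ≤ 1 / 2 → s * (u i s).re ≤ -b * s ^ 2 + A * |s| ^ 3 + Q * r i * |s| := by
    intro i s hs
    set w : ℂ := u i s - κ - v i s / (2 * κ) with hw
    set y : ℂ := v i s - deriv (v i) 0 * s with hy
    have e1 : (u i s).re = s * ((deriv (v i) 0).im / (2 * η)) + y.im / (2 * η) + w.re := by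
      have e2 : u i s = w + κ + -Complex.I * (deriv (v i) 0 * s + y) / (2 * η : ℝ) := by
        rw [hw, hy, hκd]
        have : (η : ℂ) ≠ 0 := by exact_mod_cast hη
        have hI := Complex.I_sq
        push_cast
        field_simp
        linear_combination (v i s) * hI
      rw [e2]
      simp only [Complex.add_re, Complex.div_ofReal_re, hκd]
      simp
      ring
    have e3 : |y.im / (2 * η)| ≤ K / (2 * |η|) * s ^ 2 := by
      rw [abs_div, abs_mul, abs_two]
      calc _ ≤ K * s ^ 2 / (2 * |η|) := by
            gcongr
            exact (Complex.abs_im_le_norm _).trans (hK i s hs)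
        _ = _ := by ring
    have e4 : |w.re| ≤ Q * (s ^ 2 + r i) := by
      have := (Complex.abs_re_le_norm _).trans (hQ i s hs)
      rwa [Real.sq_sqrt (add_nonneg (sq_nonneg s) (hr i).1.le)] at this
    have e5 : s * (y.im / (2 * η) + w.re) ≤ |s| * (K / (2 * |η|) * s ^ 2 + Q * (s ^ 2 + r i)) := by
      refine (le_abs_self _).trans ?_
      rw [abs_mul]
      gcongr
      exact (abs_add_le _ _).trans (add_le_add e3 e4)
    have e6 := mul_le_mul_of_nonneg_left (him i) (sq_nonneg s)
    have e7 : |s| ^ 3 = |s| * s ^ 2 := by rw [pow_succ', sq_abs]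
    rw [e1, e7, hA]
    nlinarith
  set ε : ℝ := min (1 / 2) (b / (2 * (A + 1))) with hεd
  have hε : 0 < ε := by positivity
  have hε1 : ε ≤ 1 / 2 := min_le_left _ _
  have hεA : A * ε ≤ b / 2 := by
    have : ε ≤ b / (2 * (A + 1)) := min_le_right _ _
    rw [le_div_iff₀ (by positivity)] at this
    nlinarith
  obtain ⟨χ, hχ, hχ0, hχ1, hχd, X, hX0, hX⟩ := exists_cutoff hε
  have hβ : 0 < b / 4 := by positivity
  obtain ⟨Z, hZ0, hZ⟩ := weight_mul_exp_le hβ n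
  set M : ℝ := (X * (1 + 2 * U)) * (2 / ε) ^ (2 * n) + X * Y with hM
  have hM0 : 0 ≤ M := by positivity
  refine ⟨ε, ε, Real.exp (-(U * ε)), (M + 1) * Real.exp (Q * ε) * Z, hε, hε, Real.exp_pos _,
    by positivity, fun i => ?_⟩
  have hri := (hr i).1
  have hri' : (r i : ℂ) ≠ 0 := by exact_mod_cast hri.ne'
  set ψ : ℝ → ℂ := fun s => (∫ x in (0 : ℝ)..s, u i x) / r i with hψd
  have hψ : ∀ s, HasDerivAt ψ (u i s / r i) s := fun s =>
    (((hu i).continuous.integral_hasStrictDerivAt 0 s).hasDerivAt).div_const _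
  have hψsm : ContDiff ℝ (⊤ : ℕ∞) ψ := by
    rw [contDiff_infty_iff_deriv]
    refine ⟨fun s => (hψ s).differentiableAt, ?_⟩
    rw [funext fun s => (hψ s).deriv]
    exact (hu i).div_const _
  have hψ0 : ψ 0 = 0 := by simp [hψd]
  have hψre : ∀ s, |s| ≤ ε → (ψ s).re ≤ -(b / 4) * s ^ 2 / r i + Q * ε := by
    intro s hs
    have h1 : ∀ s, HasDerivAt (fun s => (ψ s).re) ((u i s).re / r i) s := fun s => by
      have := Complex.reCLM.hasFDerivAt.comp_hasDerivAt s (hψ s)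
      simpa [Function.comp_def, Complex.div_ofReal_re] using this
    have h2 := le_of_mul_deriv_le (ε := ε) (b := b / 2 / r i) (D := Q) h1 (by simp [hψ0])
      (fun s hs => by
        have h3 := hre i s (hs.trans hε1)
        have h4 : A * |s| ^ 3 ≤ b / 2 * s ^ 2 := by
          have : A * |s| ≤ b / 2 := (mul_le_mul_of_nonneg_left hs hA0).trans hεA
          calc A * |s| ^ 3 = (A * |s|) * s ^ 2 := by rw [pow_succ', sq_abs]; ring
            _ ≤ _ := by gcongr
        have h5 : s * (u i s).re ≤ -(b / 2) * s ^ 2 + Q * r i * |s| := by linarith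
        calc s * ((u i s).re / r i) = s * (u i s).re / r i := by ring
          _ ≤ (-(b / 2) * s ^ 2 + Q * r i * |s|) / r i := by gcongr
          _ = _ := by field_simp) hs
    calc (ψ s).re ≤ -(b / 2 / r i / 2) * s ^ 2 + Q * |s| := h2
      _ ≤ -(b / 2 / r i / 2) * s ^ 2 + Q * ε := by gcongr
      _ = _ := by ring
  refine ⟨fun s => χ s * Complex.exp (ψ s), hχ.mul hψsm.cexp, fun s hs => by simp [hχ0 s hs],
    fun s hs => ?_, fun s hs => ?_⟩
  · have hs2 : |s| ≤ ε / 2 := hs.trans (by nlinarith [(hr i).2])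
    simp only [hχ1 s hs2, one_mul, Complex.norm_exp]
    gcongr
    have h1 : ‖ψ s‖ ≤ U * ε := by
      rw [hψd]
      simp only [norm_div, Complex.norm_real, Real.norm_eq_abs, abs_of_pos hri]
      rw [div_le_iff₀ hri]
      refine (intervalIntegral.norm_integral_le_of_norm_le_const (C := U) fun x hx => ?_).trans ?_
      · refine hU i x ?_
        have : |x| ≤ |s| := by
          simpa using abs_sub_left_of_mem_uIcc (uIoc_subset_uIcc hx)
        linarith
      · rw [sub_zero, mul_assoc]
        gcongr
    linarith [(abs_le.1 ((Complex.abs_re_le_norm (ψ s)).trans h1)).1]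
  · have hs1 : |s| ≤ 1 / 2 := hs.trans hε1
    set w : ℝ := √(s ^ 2 + r i) with hw
    have hsw : |s| ≤ w := Real.abs_le_sqrt (by linarith)
    have hw0 : 0 ≤ w := Real.sqrt_nonneg _
    have e1 : -(r i : ℂ) ^ 2 * deriv (deriv fun s => χ s * Complex.exp (ψ s)) s
        + (v i s - (η : ℂ) ^ 2) * (χ s * Complex.exp (ψ s))
        = (-(r i : ℂ) ^ 2 * deriv (deriv χ) s - 2 * r i * deriv χ s * u i s - χ s * E i s)
          * Complex.exp (ψ s) := by
      rw [deriv_deriv_wkb hri.ne' hχ (hu i) hψ s, heq i s, hκ2]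
      ring
    have e2 : ‖-(r i : ℂ) ^ 2 * deriv (deriv χ) s - 2 * r i * deriv χ s * u i s‖
        ≤ (X * (1 + 2 * U)) * (2 / ε) ^ (2 * n) * w ^ (2 * n) := by
      -- The terms with `χ'` vanish for `|s| < ε / 2`; elsewhere the weight is bounded below.
      rcases lt_or_ge |s| (ε / 2) with hs2 | hs2
      · rw [(hχd s hs2).1, (hχd s hs2).2]
        simp only [mul_zero, zero_mul, sub_zero, norm_zero]
        positivity
      · have hr1 : r i ≤ 1 := (hr i).2.trans (by norm_num)
        have h1 : 1 ≤ (2 / ε * w) ^ (2 * n) := by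
          refine one_le_pow₀ ?_
          rw [div_mul_eq_mul_div, le_div_iff₀ hε]
          linarith
        have h2 : ‖-(r i : ℂ) ^ 2 * deriv (deriv χ) s - 2 * r i * deriv χ s * u i s‖
            ≤ X * (1 + 2 * U) := by
          refine (norm_sub_le _ _).trans ?_
          simp only [norm_mul, norm_neg, norm_pow, Complex.norm_real, Real.norm_eq_abs,
            abs_of_pos hri, Complex.norm_two]
          calc _ ≤ 1 ^ 2 * X + 2 * 1 * X * U := by
                gcongr
                · exact (hX s).2.2
                · exact (hX s).2.1
                · exact hU i s hs1
            _ = _ := by ring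
        rw [mul_assoc (X * (1 + 2 * U)), ← mul_pow]
        exact h2.trans (le_mul_of_one_le_right (by positivity) h1)
    have e3 : ‖χ s * E i s‖ ≤ X * Y * w ^ (2 * n) := by
      rw [norm_mul, mul_assoc]
      have := (hX s).1
      have := hY i s hs1
      gcongr
    rw [e1, norm_mul, Complex.norm_exp]
    calc _ ≤ (M * w ^ (2 * n)) * Real.exp (-(b / 4) * s ^ 2 / r i + Q * ε) := by
          gcongr
          · refine (norm_sub_le _ _).trans ?_
            rw [hM, add_mul]
            exact add_le_add e2 e3
          · exact hψre s hs
      _ = M * Real.exp (Q * ε) * (w ^ (2 * n) * Real.exp (-(b / 4) * s ^ 2 / r i)) := by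
          rw [Real.exp_add]; ring
      _ ≤ (M + 1) * Real.exp (Q * ε) * (Z * r i ^ n) := by
          refine mul_le_mul ?_ (hZ (r i) s hri) (by positivity) (by positivity)
          gcongr
          linarith
      _ = _ := by ring

end Quasimode

/-! ### From quasimodes to the resolvent -/

lemma toReal_eLpNorm_indicator_closedBall (a : ℝ) {ρ D : ℝ} (hρ : 0 ≤ ρ) (hD : 0 ≤ D) :
    (eLpNorm ((Metric.closedBall a ρ).indicator fun _ => D) 2 (volume : Measure ℝ)).toReal =
      D * √(2 * ρ) := by
  rw [eLpNorm_indicator_const Metric.isClosed_closedBall.measurableSet (by simp) (by simp),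
    Real.volume_closedBall, ENNReal.toReal_mul, ← ENNReal.toReal_rpow,
    ENNReal.toReal_ofReal (by positivity), Real.sqrt_eq_rpow]
  simp [abs_of_nonneg hD]

lemma norm_toLp_le {g : ℝ → ℂ} (hg : MemLp g 2 (volume : Measure ℝ)) {a ρ D : ℝ} (hρ : 0 ≤ ρ)
    (hD : 0 ≤ D) (h1 : ∀ x, |x - a| ≤ ρ → ‖g x‖ ≤ D) (h2 : ∀ x, ρ < |x - a| → g x = 0) :
    ‖hg.toLp g‖ ≤ D * √(2 * ρ) := by
  rw [Lp.norm_toLp, ← toReal_eLpNorm_indicator_closedBall a hρ hD]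
  refine ENNReal.toReal_mono ?_ (eLpNorm_mono fun x => ?_)
  · exact (memLp_indicator_const 2 Metric.isClosed_closedBall.measurableSet D
      (Or.inr measure_closedBall_lt_top.ne)).2.ne
  · by_cases hx : |x - a| ≤ ρ
    · rw [indicator_of_mem (by simpa [Real.dist_eq] using hx), Real.norm_eq_abs, abs_of_nonneg hD]
      exact h1 x hx
    · rw [h2 x (not_le.1 hx), norm_zero]
      exact norm_nonneg _

lemma le_norm_toLp {f : ℝ → ℂ} (hf : MemLp f 2 (volume : Measure ℝ)) {a ρ c : ℝ} (hρ : 0 ≤ ρ)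
    (hc : 0 ≤ c) (h1 : ∀ x, |x - a| ≤ ρ → c ≤ ‖f x‖) :
    c * √(2 * ρ) ≤ ‖hf.toLp f‖ := by
  rw [Lp.norm_toLp, ← toReal_eLpNorm_indicator_closedBall a hρ hc]
  refine ENNReal.toReal_mono hf.2.ne (eLpNorm_mono fun x => ?_)
  by_cases hx : |x - a| ≤ ρ
  · rw [indicator_of_mem (by simpa [Real.dist_eq] using hx), Real.norm_eq_abs, abs_of_nonneg hc]
    exact h1 x hx
  · rw [indicator_of_notMem (by simpa [Real.dist_eq] using hx), norm_zero]
    exact norm_nonneg _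

/-- The increments of the potential about `a` have weight at least `1`, uniformly in `h`. -/
lemma isOrd_potential {h₁ : ℝ} {V : ℝ → ℝ → ℂ}
    (hsmooth : ∀ h ∈ Icc (0 : ℝ) h₁, ContDiff ℝ (⊤ : ℕ∞) (V h))
    (hcont : ∀ k : ℕ, ContinuousOn (fun p : ℝ × ℝ => iteratedDeriv k (V p.1) p.2)
      (Icc (0 : ℝ) h₁ ×ˢ (univ : Set ℝ))) (a : ℝ) {δ : ℝ} (hδ : δ ≤ h₁) :
    IsOrd (fun i : Ioo (0 : ℝ) δ => (i : ℝ)) 1 (fun i s => V i (a + s) - V i a) := by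
  have hsm : ∀ i : Ioo (0 : ℝ) δ, ContDiff ℝ (⊤ : ℕ∞) (V i) := fun i =>
    hsmooth i ⟨i.2.1.le, i.2.2.le.trans hδ⟩
  have hb : ∀ k : ℕ, ∃ C, ∀ i : Ioo (0 : ℝ) δ, ∀ s, |s| ≤ 1 / 2 →
      ‖iteratedDeriv k (V i) (a + s)‖ ≤ C := by
    intro k
    obtain ⟨C, hC⟩ := ((isCompact_Icc (a := (0 : ℝ)) (b := h₁)).prod
      (isCompact_Icc (a := a - 1 / 2) (b := a + 1 / 2))).exists_bound_of_continuousOn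
      ((hcont k).mono (prod_mono_right (subset_univ _)))
    refine ⟨C, fun i s hs => hC (i, a + s) ⟨⟨i.2.1.le, i.2.2.le.trans hδ⟩, ?_⟩⟩
    have := abs_le.1 hs
    constructor <;> simp only <;> linarith
  refine ⟨fun i => ((hsm i).comp (contDiff_const.add contDiff_id)).sub contDiff_const, fun j => ?_⟩
  have hsucc : ∀ j (i : Ioo (0 : ℝ) δ) s,
      iteratedDeriv (j + 1) (fun s => V i (a + s) - V i a) s
        = iteratedDeriv (j + 1) (V i) (a + s) := by
    intro j i s
    have : deriv (fun s => V i (a + s) - V i a) = deriv (fun s => V i (a + s)) :=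
      funext fun s => deriv_sub_const _
    rw [iteratedDeriv_succ', this, ← iteratedDeriv_succ', iteratedDeriv_comp_const_add]
  cases j with
  | zero =>
    obtain ⟨C, hC⟩ := hb 1
    refine ⟨|C|, fun i s hs => ?_⟩
    have hd : ∀ x, DifferentiableAt ℝ (fun s => V i (a + s) - V i a) x := fun x =>
      (((hsm i).comp (contDiff_const.add contDiff_id)).sub contDiff_const).differentiable
        (by simp) x
    have h1 := (convex_Icc (-(1 / 2) : ℝ) (1 / 2)).norm_image_sub_le_of_norm_deriv_le
      (f := fun s => V i (a + s) - V i a) (C := |C|) (x := 0) (y := s) (fun x _ => hd x)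
      (fun x hx => by
        have h2 := hsucc 0 i x
        simp only [zero_add, iteratedDeriv_one] at h2
        rw [h2, ← iteratedDeriv_one]
        exact (hC i x (abs_le.2 hx)).trans (le_abs_self C)) (by norm_num) (abs_le.1 hs)
    have h3 : |s| ≤ √(s ^ 2 + (i : ℝ)) := Real.abs_le_sqrt (by linarith [i.2.1])
    simp only [add_zero, sub_self, sub_zero, Real.norm_eq_abs] at h1
    simp only [iteratedDeriv_zero, Nat.sub_zero, pow_one]
    exact h1.trans (by gcongr)
  | succ j =>
    obtain ⟨C, hC⟩ := hb (j + 1)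
    refine ⟨C, fun i s hs => ?_⟩
    rw [hsucc, show 1 - (j + 1) = 0 by omega, pow_zero, mul_one]
    exact hC i s hs

/-- The resolvent bound for the sign of `η` that makes the quasimode decay away from `a`. -/
lemma resolvent_blowup_of_neg
    (h₁ : ℝ) (hh₁ : 0 < h₁) (V : ℝ → ℝ → ℂ)
    (hsmooth : ∀ h ∈ Icc (0:ℝ) h₁, ContDiff ℝ (⊤ : ℕ∞) (V h))
    (hcont : ∀ k : ℕ, ContinuousOn (fun p : ℝ × ℝ => iteratedDeriv k (V p.1) p.2)
      (Icc (0:ℝ) h₁ ×ˢ (univ : Set ℝ)))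
    (a η : ℝ) (hη : η ≠ 0) (him : (deriv (V 0) a).im / (2 * η) < 0) :
    ∃ δ > 0, ∀ n : ℕ, 0 < n → ∃ c > 0, ∀ h : ℝ, 0 < h → h < δ →
      ∀ R : Lp ℂ 2 (volume : Measure ℝ) →L[ℂ] Lp ℂ 2 (volume : Measure ℝ),
        (∀ f : ℝ → ℂ, ContDiff ℝ (⊤ : ℕ∞) f → HasCompactSupport f →
          ∀ F G : Lp ℂ 2 (volume : Measure ℝ),
            (∀ᵐ x : ℝ, (F : ℝ → ℂ) x = f x) →
            (∀ᵐ x : ℝ, (G : ℝ → ℂ) x = -(h:ℂ)^2 * deriv (deriv f) x + V h x * f x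
              - ((η:ℂ)^2 + V h a) * f x) →
            R G = F) →
        (c * h ^ n)⁻¹ ≤ ‖R‖ := by
  set b : ℝ := -((deriv (V 0) a).im / (2 * η)) / 2 with hbd
  have hb : 0 < b := by rw [hbd]; linarith
  -- The sign condition at `h = 0` persists for small `h`.
  obtain ⟨δ₀, hδ₀, hδ₀b⟩ : ∃ δ₀ > 0, ∀ h ∈ Icc (0 : ℝ) h₁, h < δ₀ →
      (deriv (V h) a).im / (2 * η) ≤ -b := by
    have hc : ContinuousOn (fun h => (deriv (V h) a).im / (2 * η)) (Icc 0 h₁) := by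
      have h1 : ContinuousOn (fun h => iteratedDeriv 1 (V h) a) (Icc 0 h₁) :=
        (hcont 1).comp (f := fun h : ℝ => (h, a)) (by fun_prop) fun h hh => ⟨hh, mem_univ _⟩
      simp only [iteratedDeriv_one] at h1
      exact (Complex.continuous_im.comp_continuousOn h1).div_const _
    have h2 := (hc 0 ⟨le_rfl, hh₁.le⟩).eventually_lt_const
      (show (deriv (V 0) a).im / (2 * η) < -b by rw [hbd]; linarith)
    rw [eventually_nhdsWithin_iff, Metric.eventually_nhds_iff] at h2
    obtain ⟨d, hd, hd'⟩ := h2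
    refine ⟨d, hd, fun h hh hhd => (hd' ?_ hh).le⟩
    rwa [Real.dist_eq, sub_zero, abs_of_nonneg hh.1]
  set δ : ℝ := min (min δ₀ h₁) (1 / 2) with hδd
  have hδ : 0 < δ := by positivity
  have hδ1 : δ ≤ δ₀ := (min_le_left _ _).trans (min_le_left _ _)
  have hδ2 : δ ≤ h₁ := (min_le_left _ _).trans (min_le_right _ _)
  have hδ3 : δ ≤ 1 / 2 := min_le_right _ _
  refine ⟨δ, hδ, fun n _ => ?_⟩
  have hv := isOrd_potential hsmooth hcont a hδ2
  obtain ⟨ε, t, c, C, hε, ht, hc, hC, hqm⟩ := exists_quasimode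
    (r := fun i : Ioo (0 : ℝ) δ => (i : ℝ)) (fun i => ⟨i.2.1, i.2.2.le.trans hδ3⟩) hv
    (fun i => by simp) hη hb (fun i => by
      rw [deriv_sub_const, deriv_comp_const_add, add_zero]
      exact hδ₀b i ⟨i.2.1.le, i.2.2.le.trans hδ2⟩ (i.2.2.trans_le hδ1)) (n + 1)
  refine ⟨C * √(2 * ε) / (c * √(2 * t)), by positivity, fun h hh0 hhδ R hR => ?_⟩
  obtain ⟨f, hf, hf0, hfc, hfC⟩ := hqm ⟨h, hh0, hhδ⟩
  simp only at hfc hfC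
  have hVh := hsmooth h ⟨hh0.le, hhδ.le.trans hδ2⟩
  set φ : ℝ → ℂ := fun x => f (x - a) with hφ
  have hφsm : ContDiff ℝ (⊤ : ℕ∞) φ := hf.comp (contDiff_id.sub contDiff_const)
  have hφsm2 := (contDiff_infty_iff_deriv.1 (contDiff_infty_iff_deriv.1 hφsm).2).2
  have hφcs : HasCompactSupport φ := by
    refine HasCompactSupport.intro (isCompact_closedBall a ε) fun x hx => hf0 _ ?_
    simp only [Metric.mem_closedBall, Real.dist_eq, not_le] at hx
    exact hx.le
  have hdd : ∀ x, deriv (deriv φ) x = deriv (deriv f) (x - a) := by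
    have : deriv φ = fun x => deriv f (x - a) := funext fun x => deriv_comp_sub_const f a x
    intro x
    rw [this, deriv_comp_sub_const]
  set g : ℝ → ℂ := fun x => -(h:ℂ)^2 * deriv (deriv φ) x + V h x * φ x
    - ((η:ℂ)^2 + V h a) * φ x with hg
  have hgc : Continuous g := ((continuous_const.mul hφsm2.continuous).add
    (hVh.continuous.mul hφsm.continuous)).sub (continuous_const.mul hφsm.continuous)
  have hg1 : ∀ x, |x - a| ≤ ε → ‖g x‖ ≤ C * h ^ (n + 1) := by
    intro x hx
    convert hfC (x - a) hx using 2
    simp only [hg, add_sub_cancel]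
    rw [hdd]
    simp only [hφ]
    ring
  have hg2 : ∀ x, ε < |x - a| → g x = 0 := by
    intro x hx
    have h1 : φ =ᶠ[nhds x] fun _ => 0 := by
      have : ∀ᶠ y in nhds x, ε < |y - a| :=
        (continuous_abs.comp (continuous_id.sub continuous_const)).continuousAt.eventually_const_lt
          hx
      filter_upwards [this] with y hy using hf0 _ hy.le
    have h2 : deriv φ =ᶠ[nhds x] fun _ => 0 := by simpa using h1.deriv
    have h3 : deriv (deriv φ) x = 0 := by simpa using h2.deriv_eq
    simp [hg, h1.eq_of_nhds, h3]
  have hgcs : HasCompactSupport g := by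
    refine HasCompactSupport.intro (isCompact_closedBall a ε) fun x hx => hg2 x ?_
    simpa [Real.dist_eq] using hx
  have hφL : MemLp φ 2 (volume : Measure ℝ) := hφsm.continuous.memLp_of_hasCompactSupport hφcs
  have hgL : MemLp g 2 (volume : Measure ℝ) := hgc.memLp_of_hasCompactSupport hgcs
  have hRG := hR φ hφsm hφcs (hφL.toLp φ) (hgL.toLp g) hφL.coeFn_toLp hgL.coeFn_toLp
  have k1 := le_norm_toLp hφL (a := a) (ρ := t * h) (by positivity) hc.le fun x hx => hfc _ hx
  have k2 := norm_toLp_le hgL hε.le (by positivity) hg1 hg2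
  have k3 := R.le_opNorm (hgL.toLp g)
  rw [hRG] at k3
  have k4 : √(2 * t) * h ≤ √(2 * (t * h)) := by
    rw [← mul_assoc, Real.sqrt_mul (show 0 ≤ 2 * t by positivity) h]
    gcongr
    refine Real.le_sqrt_of_sq_le ?_
    nlinarith
  have k5 : c * √(2 * t) * h ≤ ‖R‖ * (C * √(2 * ε) * h ^ n * h) :=
    calc c * √(2 * t) * h = c * (√(2 * t) * h) := by ring
      _ ≤ c * √(2 * (t * h)) := by gcongr
      _ ≤ ‖R‖ * ‖hgL.toLp g‖ := k1.trans k3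
      _ ≤ ‖R‖ * (C * h ^ (n + 1) * √(2 * ε)) := by gcongr
      _ = _ := by ring
  have k6 : c * √(2 * t) ≤ ‖R‖ * (C * √(2 * ε) * h ^ n) := by
    refine le_of_mul_le_mul_right ?_ hh0
    linarith
  rw [inv_le_iff_one_le_mul₀ (by positivity)]
  have k7 : 0 < c * √(2 * t) := by positivity
  calc 1 = c * √(2 * t) / (c * √(2 * t)) := (div_self k7.ne').symm
    _ ≤ ‖R‖ * (C * √(2 * ε) * h ^ n) / (c * √(2 * t)) := by gcongr
    _ = _ := by ring

/-- corollary of Theorem 1: under the same hypotheses, whenever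
`z = η² + V_h(a)` is not in the spectrum (i.e. a bounded resolvent `R` inverting
`H - z` on test functions exists), `‖R‖ ≥ c_n⁻¹ h⁻ⁿ` for every `n > 0` and
`0 < h < δ`; hence the resolvent norm diverges faster than any power of `h⁻¹`. -/
theorem semiclassical_resolvent_blowup
    (h₁ : ℝ) (hh₁ : 0 < h₁) (V : ℝ → ℝ → ℂ)
    (hsmooth : ∀ h ∈ Icc (0:ℝ) h₁, ContDiff ℝ (⊤ : ℕ∞) (V h))
    (hcont : ∀ k : ℕ, ContinuousOn (fun p : ℝ × ℝ => iteratedDeriv k (V p.1) p.2)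
      (Icc (0:ℝ) h₁ ×ˢ (univ : Set ℝ)))
    (a η : ℝ) (hη : η ≠ 0) (him : (deriv (V 0) a).im ≠ 0) :
    ∃ δ > 0, ∀ n : ℕ, 0 < n → ∃ c > 0, ∀ h : ℝ, 0 < h → h < δ →
      ∀ R : Lp ℂ 2 (volume : Measure ℝ) →L[ℂ] Lp ℂ 2 (volume : Measure ℝ),
        (∀ f : ℝ → ℂ, ContDiff ℝ (⊤ : ℕ∞) f → HasCompactSupport f →
          ∀ F G : Lp ℂ 2 (volume : Measure ℝ),
            (∀ᵐ x : ℝ, (F : ℝ → ℂ) x = f x) →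
            (∀ᵐ x : ℝ, (G : ℝ → ℂ) x = -(h:ℂ)^2 * deriv (deriv f) x + V h x * f x
              - ((η:ℂ)^2 + V h a) * f x) →
            R G = F) →
        (c * h ^ n)⁻¹ ≤ ‖R‖ := by
  rcases lt_or_ge ((deriv (V 0) a).im / (2 * η)) 0 with hneg | hpos
  · exact resolvent_blowup_of_neg h₁ hh₁ V hsmooth hcont a η hη hneg
  · have hpos' : 0 < (deriv (V 0) a).im / (2 * η) :=
      lt_of_le_of_ne hpos (div_ne_zero him (by simpa using hη)).symm
    have := resolvent_blowup_of_neg h₁ hh₁ V hsmooth hcont a (-η) (neg_ne_zero.2 hη) (by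
      rw [mul_neg, div_neg]; linarith)
    simpa only [Complex.ofReal_neg, neg_sq] using this
end

section
/- Let H be any closed extension in L²(ℝ) of P² + Σ_{m=1}^n c_m Q^m on C_c^∞(ℝ), with n even and Re c_n > 0, Im c_n > 0. If z ∈ ℂ satisfies 0 < arg z < arg c_n, then ‖(H − σ z I)^{-1}‖ diverges to infinity faster than any power of σ as σ → +∞ (interpreting the norm as +∞ when σz ∈ Spec(H)). -/
open MeasureTheory

/-!
With `s = σ ^ (1 / n)` and `f x = u (x / s)`, the operator `H - σ z` acts on `u` as
`s ^ n * (-h² ∂² + Q_s)`, where `h = s ^ (-(n / 2 + 1))` and `Q_s y → c_n yⁿ - z` locally uniformly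
with error `O(1 / s)`. The sector condition gives `z = η² + c_n aⁿ` with `a, η > 0`, so that
`Q_s ≈ -η²` near `a`, while `Im Q_s` increases through `a` at a positive rate.

A pseudomode is sought as `u = χ exp (W / h)`, `W' = w`, with `χ` a cutoff near `a`. Away from the
region where `χ` varies, `(-h² ∂² + Q) u = -(w² + h w' - Q) u`, so `w` only has to solve the Riccati
equation `w² + h w' = Q` up to `O(h ^ (N + 1))`. Instead of transport equations for each coefficient
in `h`, the iteration `w ↦ √(Q - h w')` is run on shrinking complex discs (`exists_riccati`); all
bounds are then uniform in `Q`, hence in the lower-order coefficients of the potential. The branch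
with `Im w < 0` has `Re w = Im (w²) / (2 Im w)`, which changes sign from `+` to `-` at `a`, so
`Re W` decays quadratically (`phase_re_le`) and the cutoff costs only `exp (-γ / h)`.

Hence `‖(H - σ z) f‖ ≤ σ ^ (-k) ‖f‖` for large `σ` (`exists_pseudomode`), and any bounded `R` with
`R (H - σ z) f = f` has norm at least `σ ^ k`.
-/

namespace Pseudomode

open Metric Topology

/-! ### Approximate solutions of the Riccati equation -/

/-- Cauchy's estimate on a smaller concentric ball. -/
lemma norm_deriv_le_of_concentric {a : ℂ} {r r' M : ℝ} (hr : r' < r) {f : ℂ → ℂ}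
    (hf : DifferentiableOn ℂ f (ball a r)) (hM : ∀ y ∈ ball a r, ‖f y‖ ≤ M) :
    ∀ y ∈ ball a r', ‖deriv f y‖ ≤ M / (r - r') := by
  intro y hy
  have hsub : closedBall y (r - r') ⊆ ball a r := by
    apply closedBall_subset_ball'
    rw [mem_ball] at hy
    linarith
  refine Complex.norm_deriv_le_of_forall_mem_sphere_norm_le (by linarith) ?_
    fun x hx => hM x (hsub (sphere_subset_closedBall hx))
  exact hf.diffContOnCl_ball hsub

/-- The square root of `ζ` with negative imaginary part, for `ζ` off the half-line `[0, ∞)`. -/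
noncomputable def lowerSqrt (ζ : ℂ) : ℂ := -Complex.I * (-ζ) ^ ((2 : ℂ)⁻¹)

lemma lowerSqrt_sq (ζ : ℂ) : lowerSqrt ζ ^ 2 = ζ := by
  have := Complex.cpow_nat_inv_pow (-ζ) (n := 2) (by norm_num)
  push_cast at this
  rw [lowerSqrt, mul_pow, this]
  simp

lemma half_sq_le_neg_re {ζ : ℂ} {η : ℝ} (h : ‖ζ + (η : ℂ) ^ 2‖ ≤ η ^ 2 / 2) :
    η ^ 2 / 2 ≤ (-ζ).re := by
  have h1 := (Complex.abs_re_le_norm _).trans h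
  have h2 : (ζ + (η : ℂ) ^ 2).re = ζ.re + η ^ 2 := by
    rw [← Complex.ofReal_pow, Complex.add_re, Complex.ofReal_re]
  rw [h2, abs_le] at h1
  rw [Complex.neg_re]
  linarith [h1.2]

lemma lowerSqrt_im {ζ : ℂ} {η : ℝ} (h : ‖ζ + (η : ℂ) ^ 2‖ ≤ η ^ 2 / 2) :
    (lowerSqrt ζ).im ≤ -(η / 2) := by
  have h1 := half_sq_le_neg_re h
  have h2 : (lowerSqrt ζ).im = -((-ζ) ^ ((2 : ℂ)⁻¹)).re := by simp [lowerSqrt]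
  rw [h2, Complex.cpow_inv_two_re, neg_le_neg_iff]
  apply Real.le_sqrt_of_sq_le
  have := Complex.re_le_norm (-ζ)
  nlinarith

lemma lowerSqrt_norm {ζ : ℂ} {η : ℝ} (hη : 0 < η) (h : ‖ζ + (η : ℂ) ^ 2‖ ≤ η ^ 2 / 2) :
    ‖lowerSqrt ζ‖ ≤ 2 * η := by
  have h1 : ‖lowerSqrt ζ‖ ^ 2 = ‖ζ‖ := by rw [← norm_pow, lowerSqrt_sq]
  have h2 : ‖ζ‖ ≤ η ^ 2 / 2 + η ^ 2 := by
    calc ‖ζ‖ = ‖(ζ + (η : ℂ) ^ 2) - (η : ℂ) ^ 2‖ := by ring_nf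
      _ ≤ ‖ζ + (η : ℂ) ^ 2‖ + ‖(η : ℂ) ^ 2‖ := norm_sub_le _ _
      _ ≤ _ := by
        have : ‖(η : ℂ) ^ 2‖ = η ^ 2 := by simp
        linarith
  nlinarith [norm_nonneg (lowerSqrt ζ)]

lemma lowerSqrt_differentiableOn {f : ℂ → ℂ} {s : Set ℂ} {η : ℝ} (hη : 0 < η)
    (hf : DifferentiableOn ℂ f s) (h : ∀ y ∈ s, ‖f y + (η : ℂ) ^ 2‖ ≤ η ^ 2 / 2) :
    DifferentiableOn ℂ (fun y => lowerSqrt (f y)) s := by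
  unfold lowerSqrt
  refine (DifferentiableOn.cpow_const hf.neg ?_).const_mul _
  intro y hy
  left
  have := half_sq_le_neg_re (h y hy)
  simp only [Pi.neg_apply]
  nlinarith [sq_nonneg η, pow_pos hη 2]

/-- Approximate solutions of the Riccati equation `w² + h w' = Q`, holomorphic near `a`, with
residual `O(h ^ (N + 1))` uniformly over the potentials `Q` close to `-η²`. They arise by iterating
`w ↦ √(Q - h w')`: the new residual is `h` times the derivative of the increment, and the increment
is the old residual divided by the sum of the two roots, whose imaginary part is at most `-η`.
Cauchy's estimate on shrinking balls controls the derivative. -/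
lemma exists_riccati_s17 (a : ℂ) {r η : ℝ} (hη : 0 < η) (N : ℕ) :
    ∀ r', 0 < r' → r' < r → ∃ C : ℝ, 0 ≤ C ∧ ∃ h₀ : ℝ, 0 < h₀ ∧ ∀ (Q : ℂ → ℂ) (h : ℝ),
      DifferentiableOn ℂ Q (ball a r) → (∀ y ∈ ball a r, ‖Q y + (η : ℂ) ^ 2‖ ≤ η ^ 2 / 4) →
      0 < h → h ≤ h₀ → ∃ w : ℂ → ℂ, DifferentiableOn ℂ w (ball a r') ∧
        ∀ y ∈ ball a r', (w y).im ≤ -(η / 2) ∧ ‖w y‖ ≤ 2 * η ∧ ‖w y ^ 2 - Q y‖ ≤ C * h ∧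
          ‖w y ^ 2 + h * deriv w y - Q y‖ ≤ C * h ^ (N + 1) := by
  induction N with
  | zero =>
    intro r' hr' hr
    have hd : 0 < r - r' := by linarith
    refine ⟨2 * η / (r - r'), by positivity, 1, one_pos, fun Q h hQ hQη h0 _ => ?_⟩
    have hQη' : ∀ y ∈ ball a r, ‖Q y + (η : ℂ) ^ 2‖ ≤ η ^ 2 / 2 := fun y hy =>
      (hQη y hy).trans (by nlinarith [sq_nonneg η])
    have hdiff := lowerSqrt_differentiableOn hη hQ hQη'
    have hsub : ball a r' ⊆ ball a r := ball_subset_ball hr.le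
    refine ⟨fun y => lowerSqrt (Q y), hdiff.mono hsub, fun y hy => ⟨lowerSqrt_im (hQη' y (hsub hy)),
      lowerSqrt_norm hη (hQη' y (hsub hy)), ?_, ?_⟩⟩
    · simp only [lowerSqrt_sq, sub_self, norm_zero]
      positivity
    · have := norm_deriv_le_of_concentric hr hdiff (fun y hy => lowerSqrt_norm hη (hQη' y hy)) y hy
      simp only [lowerSqrt_sq, add_sub_cancel_left, norm_mul, Complex.norm_real, Real.norm_eq_abs,
        abs_of_pos h0, zero_add, pow_one]
      nlinarith
  | succ N ih =>
    intro r' hr' hr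
    obtain ⟨C, hC, h₀, hh₀, H⟩ := ih ((r' + r) / 2) (by linarith) (by linarith)
    set r₁ := (r' + r) / 2 with hr₁
    -- An intermediate radius: one derivative is taken to form the new root, one in its residual.
    set r₂ := (r' + r₁) / 2 with hr₂
    have hd : 0 < r₁ - r₂ := by linarith
    have hd' : 0 < r₂ - r' := by linarith
    have hrr : r' < r₂ := by linarith
    set K := 2 * η / (r₁ - r₂) with hK
    have hK0 : 0 < K := by positivity
    refine ⟨K + C / η / (r₂ - r'), by positivity, min h₀ (η ^ 2 / 4 / K), by positivity,
      fun Q h hQ hQη h0 hh => ?_⟩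
    obtain ⟨w, hw, Hw⟩ := H Q h hQ hQη h0 (hh.trans (min_le_left _ _))
    have hhK : h * K ≤ η ^ 2 / 4 := by
      rw [← le_div_iff₀ hK0]; exact hh.trans (min_le_right _ _)
    have hs1 : ball a r₁ ⊆ ball a r := ball_subset_ball (by linarith)
    have hs2 : ball a r₂ ⊆ ball a r₁ := ball_subset_ball (by linarith)
    have hs3 : ball a r' ⊆ ball a r₂ := ball_subset_ball (by linarith)
    have hdw : ∀ y ∈ ball a r₂, ‖(h : ℂ) * deriv w y‖ ≤ h * K := by
      intro y hy
      have := norm_deriv_le_of_concentric (by linarith : r₂ < r₁) hw (fun y hy => (Hw y hy).2.1) y hy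
      rw [norm_mul, Complex.norm_real, Real.norm_eq_abs, abs_of_pos h0]
      gcongr
    set ζ : ℂ → ℂ := fun y => Q y - h * deriv w y with hζ
    have hζη : ∀ y ∈ ball a r₂, ‖ζ y + (η : ℂ) ^ 2‖ ≤ η ^ 2 / 2 := by
      intro y hy
      calc ‖ζ y + (η : ℂ) ^ 2‖ = ‖(Q y + (η : ℂ) ^ 2) - h * deriv w y‖ := by rw [hζ]; ring_nf
        _ ≤ ‖Q y + (η : ℂ) ^ 2‖ + ‖(h : ℂ) * deriv w y‖ := norm_sub_le _ _
        _ ≤ η ^ 2 / 4 + h * K := add_le_add (hQη y (hs1 (hs2 hy))) (hdw y hy)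
        _ ≤ _ := by linarith
    have hζd : DifferentiableOn ℂ ζ (ball a r₂) :=
      (hQ.mono (hs2.trans hs1)).sub (((hw.deriv isOpen_ball).mono hs2).const_mul _)
    have hv := lowerSqrt_differentiableOn hη hζd hζη
    set v : ℂ → ℂ := fun y => lowerSqrt (ζ y) with hvdef
    have hinc : ∀ y ∈ ball a r₂, ‖v y - w y‖ ≤ C * h ^ (N + 1) / η := by
      intro y hy
      have h1 : (v y - w y) * (v y + w y) = -(w y ^ 2 + h * deriv w y - Q y) := by
        have : v y ^ 2 = ζ y := lowerSqrt_sq _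
        linear_combination this
      have h2 : η ≤ ‖v y + w y‖ := by
        have i1 := lowerSqrt_im (hζη y hy)
        have i2 := (Hw y (hs2 hy)).1
        have i3 := Complex.abs_im_le_norm (v y + w y)
        rw [Complex.add_im, abs_le'] at i3
        have i4 : (v y).im ≤ -(η / 2) := i1
        linarith [i3.2]
      rw [le_div_iff₀ hη]
      calc ‖v y - w y‖ * η ≤ ‖v y - w y‖ * ‖v y + w y‖ := by gcongr
        _ = ‖w y ^ 2 + h * deriv w y - Q y‖ := by rw [← norm_mul, h1, norm_neg]
        _ ≤ _ := (Hw y (hs2 hy)).2.2.2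
    refine ⟨v, hv.mono hs3, fun y hy => ⟨lowerSqrt_im (hζη y (hs3 hy)),
      lowerSqrt_norm hη (hζη y (hs3 hy)), ?_, ?_⟩⟩
    · have : v y ^ 2 = ζ y := lowerSqrt_sq _
      rw [this, hζ]
      simp only [sub_sub_cancel_left, norm_neg]
      have h3 := hdw y (hs3 hy)
      have h4 : 0 ≤ C / η / (r₂ - r') * h := by positivity
      linarith
    · have hres : v y ^ 2 + h * deriv v y - Q y = h * deriv (fun y => v y - w y) y := by
        have hnv : DifferentiableAt ℂ v y := hv.differentiableAt (isOpen_ball.mem_nhds (hs3 hy))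
        have hnw : DifferentiableAt ℂ w y := hw.differentiableAt (isOpen_ball.mem_nhds (hs2 (hs3 hy)))
        have : v y ^ 2 = ζ y := lowerSqrt_sq _
        rw [deriv_fun_sub hnv hnw, this, hζ]
        ring
      have h5 := norm_deriv_le_of_concentric hrr (hv.sub (hw.mono hs2)) hinc y hy
      rw [hres, norm_mul, Complex.norm_real, Real.norm_eq_abs, abs_of_pos h0]
      calc h * ‖deriv (fun y => v y - w y) y‖ ≤ h * (C * h ^ (N + 1) / η / (r₂ - r')) := by
            gcongr; exact h5
        _ = C / η / (r₂ - r') * h ^ (N + 1 + 1) := by ring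
        _ ≤ _ := by
          have : 0 ≤ K * h ^ (N + 1 + 1) := by positivity
          linarith

/-! ### The cutoff and the phase -/

lemma exists_cutoff (a : ℝ) {ρ : ℝ} (hρ : 0 < ρ) : ∃ X : ℝ → ℂ, ContDiff ℝ (⊤ : ℕ∞) X ∧
    (∀ t, |t - a| ≤ ρ / 2 → X t = 1) ∧ (∀ t, ρ ≤ |t - a| → X t = 0) ∧
    ∃ D : ℝ, 0 ≤ D ∧ ∀ t, ‖deriv X t‖ ≤ D ∧ ‖deriv (deriv X) t‖ ≤ D := by
  let b : ContDiffBump a := ⟨ρ / 2, ρ, by linarith, by linarith⟩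
  have hX : ContDiff ℝ (⊤ : ℕ∞) (fun t => ((b t : ℝ) : ℂ)) :=
    Complex.ofRealCLM.contDiff.comp b.contDiff
  have hs : HasCompactSupport (fun t => ((b t : ℝ) : ℂ)) :=
    b.hasCompactSupport.comp_left (g := fun x : ℝ => (x : ℂ)) Complex.ofReal_zero
  refine ⟨fun t => ((b t : ℝ) : ℂ), hX, ?_, ?_, ?_⟩
  · intro t ht
    have : b t = 1 := b.one_of_mem_closedBall (by simpa [mem_closedBall, Real.dist_eq] using ht)
    simp [this]
  · intro t ht
    have : b t = 0 := b.zero_of_le_dist (by simpa [Real.dist_eq] using ht)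
    simp [this]
  · have h1 : ContDiff ℝ (⊤ : ℕ∞) (deriv (fun t => ((b t : ℝ) : ℂ))) :=
      (contDiff_infty_iff_deriv.1 hX).2
    have h2 : ContDiff ℝ (⊤ : ℕ∞) (deriv (deriv (fun t => ((b t : ℝ) : ℂ)))) :=
      (contDiff_infty_iff_deriv.1 h1).2
    obtain ⟨C₁, hC₁⟩ := h1.continuous.bounded_above_of_compact_support hs.deriv
    obtain ⟨C₂, hC₂⟩ := h2.continuous.bounded_above_of_compact_support hs.deriv.deriv
    exact ⟨max C₁ C₂, ((norm_nonneg _).trans (hC₁ 0)).trans (le_max_left _ _),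
      fun t => ⟨(hC₁ t).trans (le_max_left _ _), (hC₂ t).trans (le_max_right _ _)⟩⟩

/-- Integrating a linear upper bound on the derivative. -/
lemma le_of_deriv_le_linear {g g' : ℝ → ℝ} {ρ α β : ℝ} (hg : ∀ t, 0 ≤ t → t ≤ ρ → HasDerivAt g (g' t) t)
    (h0 : g 0 = 0) (hg' : ∀ t, 0 ≤ t → t ≤ ρ → g' t ≤ -α * t + β) {t : ℝ} (ht : 0 ≤ t) (htρ : t ≤ ρ) :
    g t ≤ -α / 2 * t ^ 2 + β * t := by
  have hB : ∀ x : ℝ, HasDerivAt (fun t : ℝ => -α / 2 * t ^ 2 + β * t) (-α * x + β) x := by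
    intro x
    have := ((hasDerivAt_pow 2 x).const_mul (-α / 2)).add ((hasDerivAt_id x).const_mul β)
    exact this.congr_deriv (by simp; ring)
  refine image_le_of_deriv_right_le_deriv_boundary (f := g) (f' := g') (a := 0) (b := ρ)
    (B := fun t => -α / 2 * t ^ 2 + β * t) (B' := fun t => -α * t + β)
    ?_ ?_ ?_ ?_ ?_ ?_ ⟨ht, htρ⟩
  · exact fun x hx => (hg x hx.1 hx.2).continuousAt.continuousWithinAt
  · exact fun x hx => (hg x hx.1 hx.2.le).hasDerivWithinAt
  · simp [h0]
  · exact fun x _ => (hB x).continuousAt.continuousWithinAt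
  · exact fun x _ => (hB x).hasDerivWithinAt
  · exact fun x hx => hg' x hx.1 hx.2.le

/-- If `Im w < 0`, then `Re w = Im (w²) / (2 Im w)`, so the sign of `Im Q` decides that of `Re w`. -/
lemma re_le_of_im_sq_ge {w : ℂ} {η x δ : ℝ} (hη : 0 < η) (hx : 0 ≤ x) (hδ : 0 ≤ δ)
    (him : w.im ≤ -(η / 2)) (hn : ‖w‖ ≤ 2 * η) (h : x - δ ≤ (w ^ 2).im) :
    w.re ≤ -(x / (4 * η)) + δ / η := by
  have h1 : (w ^ 2).im = 2 * w.re * w.im := by rw [pow_two, Complex.mul_im]; ring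
  have h2 : -w.im ≤ 2 * η := (neg_le_abs _).trans ((Complex.abs_im_le_norm w).trans hn)
  have h3 : w.re ≤ (x - δ) / (2 * w.im) := by
    rw [le_div_iff_of_neg (by linarith)]
    linarith
  have h4 : (x - δ) / (2 * w.im) = -(x / (2 * -w.im)) + δ / (2 * -w.im) := by
    have : w.im ≠ 0 := by linarith
    field_simp
    ring
  have h5 : x / (4 * η) ≤ x / (2 * -w.im) := by
    apply div_le_div_of_nonneg_left hx <;> linarith
  have h6 : δ / (2 * -w.im) ≤ δ / η := by
    apply div_le_div_of_nonneg_left hδ <;> linarith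
  linarith

lemma re_ge_of_im_sq_le {w : ℂ} {η x δ : ℝ} (hη : 0 < η) (hx : 0 ≤ x) (hδ : 0 ≤ δ)
    (him : w.im ≤ -(η / 2)) (hn : ‖w‖ ≤ 2 * η) (h : (w ^ 2).im ≤ -x + δ) :
    x / (4 * η) - δ / η ≤ w.re := by
  -- Apply the previous bound to the reflection `-conj w`.
  have := re_le_of_im_sq_ge (w := -(starRingEnd ℂ w)) hη hx hδ (by simpa using him) (by simpa using hn)
    (by rw [neg_sq, ← map_pow, Complex.conj_im]; linarith)
  simp only [Complex.neg_re, Complex.conj_re] at this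
  linarith

/-- The real part of the phase `W = ∫ w` decreases quadratically on both sides of `a`. -/
lemma phase_re_le {a ρ η κ δ : ℝ} (hη : 0 < η) (hκ : 0 ≤ κ) (hδ : 0 ≤ δ)
    {w W Q : ℂ → ℂ} (hW : ∀ y ∈ ball (a : ℂ) (2 * ρ), HasDerivAt W (w y) y) (hWa : W a = 0)
    (hw : ∀ y ∈ ball (a : ℂ) (2 * ρ), (w y).im ≤ -(η / 2) ∧ ‖w y‖ ≤ 2 * η ∧ ‖w y ^ 2 - Q y‖ ≤ δ)
    (hQp : ∀ t : ℝ, 0 ≤ t → t ≤ ρ → κ * t - δ ≤ (Q (a + t : ℝ)).im)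
    (hQm : ∀ t : ℝ, 0 ≤ t → t ≤ ρ → (Q (a - t : ℝ)).im ≤ -(κ * t) + δ)
    (x : ℝ) (hx : |x - a| ≤ ρ) (hρ : 0 < ρ) :
    (W x).re ≤ -(κ / (4 * η)) / 2 * |x - a| ^ 2 + 2 * δ / η * |x - a| := by
  have hmem : ∀ t : ℝ, |t| ≤ ρ → ((a + t : ℝ) : ℂ) ∈ ball (a : ℂ) (2 * ρ) := by
    intro t ht
    rw [mem_ball, Complex.dist_eq, ← Complex.ofReal_sub, Complex.norm_real, Real.norm_eq_abs]
    simp only [add_sub_cancel_left]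
    linarith
  have hre : ∀ t : ℝ, |t| ≤ ρ →
      HasDerivAt (fun t : ℝ => (W (a + t : ℝ)).re) (w (a + t : ℝ)).re t := by
    intro t ht
    have h1 := (hW _ (hmem t ht)).real_of_complex
    exact h1.comp_const_add a t
  have him : ∀ t : ℝ, |t| ≤ ρ → |(w (a + t : ℝ) ^ 2).im - (Q (a + t : ℝ)).im| ≤ δ := by
    intro t ht
    rw [← Complex.sub_im]
    exact (Complex.abs_im_le_norm _).trans (hw _ (hmem t ht)).2.2
  rcases le_total 0 (x - a) with hxa | hxa
  · rw [abs_of_nonneg hxa] at hx ⊢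
    have := le_of_deriv_le_linear (g := fun t : ℝ => (W (a + t : ℝ)).re)
      (g' := fun t => (w (a + t : ℝ)).re) (ρ := ρ) (α := κ / (4 * η)) (β := 2 * δ / η)
      (fun t h0 h1 => hre t (by rwa [abs_of_nonneg h0])) (by simp [hWa]) ?_ hxa hx
    · simpa using this
    · intro t h0 h1
      have ht : |t| ≤ ρ := by rwa [abs_of_nonneg h0]
      have h2 := hw _ (hmem t ht)
      have h3 := (abs_le.1 (him t ht)).1
      have := re_le_of_im_sq_ge (x := κ * t) (δ := 2 * δ) hη (by positivity) (by positivity)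
        h2.1 h2.2.1 (by linarith [hQp t h0 h1])
      calc _ ≤ _ := this
        _ = _ := by ring
  · rw [abs_of_nonpos hxa] at hx ⊢
    have hder : ∀ t : ℝ, |t| ≤ ρ →
        HasDerivAt (fun t : ℝ => (W (a + -t : ℝ)).re) (-(w (a + -t : ℝ)).re) t := by
      intro t ht
      have := (hre (-t) (by rwa [abs_neg])).scomp t (hasDerivAt_neg t)
      simpa [Function.comp_def] using this
    have := le_of_deriv_le_linear (g := fun t : ℝ => (W (a + -t : ℝ)).re)
      (g' := fun t => -(w (a + -t : ℝ)).re) (ρ := ρ) (α := κ / (4 * η)) (β := 2 * δ / η)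
      (fun t h0 h1 => hder t (by rwa [abs_of_nonneg h0])) (by simp [hWa]) ?_
      (t := -(x - a)) (by linarith) hx
    · simpa using this
    · intro t h0 h1
      have ht : |-t| ≤ ρ := by rwa [abs_neg, abs_of_nonneg h0]
      have h2 := hw _ (hmem (-t) ht)
      have h3 := (abs_le.1 (him (-t) ht)).2
      have h4 := hQm t h0 h1
      rw [sub_eq_add_neg] at h4
      have := re_ge_of_im_sq_le (x := κ * t) (δ := 2 * δ) hη (by positivity) (by positivity)
        h2.1 h2.2.1 (by linarith)
      calc _ ≤ _ := neg_le_neg this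
        _ = _ := by ring

/-! ### The cut-off WKB state and its `L²` estimates -/

/-- The cut-off WKB state `u = X e^{W/h}`: its residual is pointwise `ε |u|`, from the Riccati
residual of `w = W'`, plus an exponentially small term where the cutoff varies. -/
lemma exists_quasimode {a ρ η h ε γ D : ℝ} (hη : 0 < η) (h0 : 0 < h)
    (h1 : h ≤ 1) (hhρ : h ≤ ρ / 2) {X : ℝ → ℂ} (hX : ContDiff ℝ (⊤ : ℕ∞) X)
    (hX1 : ∀ t, |t - a| ≤ ρ / 2 → X t = 1) (hX0 : ∀ t, ρ ≤ |t - a| → X t = 0)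
    (hD : 0 ≤ D) (hXD : ∀ t, ‖deriv X t‖ ≤ D ∧ ‖deriv (deriv X) t‖ ≤ D)
    {w W Q : ℂ → ℂ} (hw : DifferentiableOn ℂ w (ball (a : ℂ) (2 * ρ)))
    (hW : ∀ y ∈ ball (a : ℂ) (2 * ρ), HasDerivAt W (w y) y) (hWa : W a = 0)
    (hwn : ∀ y ∈ ball (a : ℂ) (2 * ρ), ‖w y‖ ≤ 2 * η)
    (hres : ∀ y ∈ ball (a : ℂ) (2 * ρ), ‖w y ^ 2 + h * deriv w y - Q y‖ ≤ ε)
    (hdec : ∀ t : ℝ, ρ / 2 ≤ |t - a| → |t - a| ≤ ρ → (W t).re ≤ -γ) :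
    ∃ u : ℝ → ℂ, ContDiff ℝ (⊤ : ℕ∞) u ∧ (∀ t, ρ ≤ |t - a| → u t = 0) ∧
      (∀ t, |t - a| ≤ h → Real.exp (-(2 * η)) ≤ ‖u t‖) ∧
      ∀ t : ℝ, ‖-(h : ℂ) ^ 2 * deriv (deriv u) t + Q t * u t‖ ≤ ε * ‖u t‖ +
        (closedBall a ρ).indicator (fun _ => (D + 4 * η * D) * Real.exp (-γ / h)) t := by
  have hhC : (h : ℂ) ≠ 0 := by exact_mod_cast h0.ne'
  have hmem : ∀ t : ℝ, |t - a| < 2 * ρ → (t : ℂ) ∈ ball (a : ℂ) (2 * ρ) := by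
    intro t ht
    rwa [mem_ball, Complex.dist_eq, ← Complex.ofReal_sub, Complex.norm_real, Real.norm_eq_abs]
  set e : ℝ → ℂ := fun t => Complex.exp (W t / h) with he
  have hen : ∀ t, ‖e t‖ = Real.exp ((W t).re / h) := by
    intro t
    rw [he, Complex.norm_exp, Complex.div_ofReal_re]
  set u : ℝ → ℂ := fun t => X t * e t with hu
  have hfar : ∀ t, ρ < |t - a| → u =ᶠ[𝓝 t] fun _ => 0 := by
    intro t ht
    have : ∀ᶠ s in 𝓝 t, ρ < |s - a| :=
      (continuous_abs.comp (continuous_id.sub continuous_const)).continuousAt.eventually_const_lt ht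
    filter_upwards [this] with s hs
    simp [hu, hX0 s hs.le]
  have hnear : ∀ (b : ℝ) t, |t - a| < b → ∀ᶠ s in 𝓝 t, |s - a| < b := fun b t ht =>
    (continuous_abs.comp (continuous_id.sub continuous_const)).continuousAt.eventually_lt_const ht
  have heD : ∀ t, |t - a| < 2 * ρ → HasDerivAt e (e t * (w t / h)) t := fun t ht =>
    (((hW t (hmem t ht)).comp_ofReal).div_const (h : ℂ)).cexp
  have hXd : ∀ t, HasDerivAt X (deriv X t) t := fun t =>
    (hX.differentiable (by simp) t).hasDerivAt
  have hXdd : ∀ t, HasDerivAt (deriv X) (deriv (deriv X) t) t := fun t =>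
    ((contDiff_infty_iff_deriv.1 hX).2.differentiable (by simp) t).hasDerivAt
  have hu1 : ∀ t, |t - a| < 2 * ρ → deriv u t = deriv X t * e t + X t * (e t * (w t / h)) :=
    fun t ht => ((hXd t).mul (heD t ht)).deriv
  have hu2 : ∀ t, |t - a| < 2 * ρ → deriv (deriv u) t =
      (deriv (deriv X) t * e t + deriv X t * (e t * (w t / h))) +
      (deriv X t * (e t * (w t / h)) +
        X t * (e t * (w t / h) * (w t / h) + e t * (deriv w t / h))) := by
    intro t ht
    have hev : deriv u =ᶠ[𝓝 t] fun t => deriv X t * e t + X t * (e t * (w t / h)) := by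
      filter_upwards [hnear _ t ht] with s hs using hu1 s hs
    rw [hev.deriv_eq]
    have hwd : HasDerivAt (fun t : ℝ => w t / h) (deriv w t / h) t :=
      ((hw.differentiableAt (isOpen_ball.mem_nhds (hmem t ht))).hasDerivAt.comp_ofReal).div_const _
    exact (((hXdd t).mul (heD t ht)).add ((hXd t).mul ((heD t ht).mul hwd))).deriv
  refine ⟨u, ?_, fun t ht => by simp [hu, hX0 t ht], ?_, ?_⟩
  · rw [contDiff_iff_contDiffAt]
    intro t
    rcases lt_or_ge (|t - a|) (2 * ρ) with ht | ht
    · have hWd : DifferentiableOn ℂ W (ball (a : ℂ) (2 * ρ)) :=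
        fun y hy => (hW y hy).differentiableAt.differentiableWithinAt
      have h3 : ContDiffAt ℂ (⊤ : ℕ∞) W (t : ℂ) :=
        (hWd.contDiffOn isOpen_ball).contDiffAt (isOpen_ball.mem_nhds (hmem t ht))
      have h4 : ContDiffAt ℝ (⊤ : ℕ∞) (fun s : ℝ => W s) t :=
        (h3.restrict_scalars ℝ).comp t Complex.ofRealCLM.contDiff.contDiffAt
      exact hX.contDiffAt.mul (h4.div_const _).cexp
    · exact contDiffAt_const.congr_of_eventuallyEq (hfar t (by linarith))
  · intro t ht
    have hWn : ‖W t - W a‖ ≤ 2 * η * ‖(t : ℂ) - a‖ :=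
      (convex_ball (a : ℂ) (2 * ρ)).norm_image_sub_le_of_norm_hasDerivWithin_le
        (fun y hy => (hW y hy).hasDerivWithinAt) hwn (mem_ball_self (by linarith))
        (hmem t (by linarith))
    rw [hWa, sub_zero, ← Complex.ofReal_sub, Complex.norm_real, Real.norm_eq_abs] at hWn
    have h5 : ‖u t‖ = Real.exp ((W t).re / h) := by
      rw [hu, ← hen t]
      simp [hX1 t (by linarith)]
    rw [h5, Real.exp_le_exp, le_div_iff₀ h0]
    have h6 := (abs_le.1 (Complex.abs_re_le_norm (W t))).1
    nlinarith
  · intro t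
    have hind : 0 ≤ (closedBall a ρ).indicator
        (fun _ => (D + 4 * η * D) * Real.exp (-γ / h)) t :=
      Set.indicator_nonneg (fun _ _ => by positivity) t
    rcases lt_or_ge ρ (|t - a|) with ht | ht
    · have h7 : deriv (deriv u) t = 0 := by
        have h8 : deriv u =ᶠ[𝓝 t] fun _ => 0 := by
          have := (hfar t ht).deriv
          simpa using this
        rw [h8.deriv_eq]; simp
      have h9 : u t = 0 := (hfar t ht).eq_of_nhds
      rw [h7, h9]
      simpa using hind
    · have ht2 : |t - a| < 2 * ρ := by linarith
      have hm := hmem t ht2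
      have hsplit : -(h : ℂ) ^ 2 * deriv (deriv u) t + Q t * u t =
          -(w t ^ 2 + h * deriv w t - Q t) * u t +
            -((h : ℂ) ^ 2 * deriv (deriv X) t + 2 * h * deriv X t * w t) * e t := by
        rw [hu2 t ht2, hu]
        field_simp
        ring
      rw [hsplit]
      refine (norm_add_le _ _).trans (add_le_add ?_ ?_)
      · rw [norm_mul, norm_neg]
        exact mul_le_mul_of_nonneg_right (hres _ hm) (norm_nonneg _)
      · rcases lt_or_ge (|t - a|) (ρ / 2) with hlt | hge
        · have hX1' : X =ᶠ[𝓝 t] fun _ => 1 := by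
            filter_upwards [hnear _ t hlt] with s hs using hX1 s hs.le
          have h10 : deriv X =ᶠ[𝓝 t] fun _ => 0 := by simpa using hX1'.deriv
          have h11 : deriv (deriv X) t = 0 := by rw [h10.deriv_eq]; simp
          rw [h10.eq_of_nhds, h11]
          simpa using hind
        · rw [Set.indicator_of_mem (by simpa [Real.dist_eq] using ht), norm_mul, norm_neg, hen]
          have hd := hdec t hge ht
          have hexp : Real.exp ((W t).re / h) ≤ Real.exp (-γ / h) := by gcongr
          refine mul_le_mul ?_ hexp (Real.exp_nonneg _) (by positivity)
          obtain ⟨d1, d2⟩ := hXD t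
          have hhn : ‖(h : ℂ)‖ = h := by rw [Complex.norm_real, Real.norm_eq_abs, abs_of_pos h0]
          calc ‖(h : ℂ) ^ 2 * deriv (deriv X) t + 2 * h * deriv X t * w t‖
              ≤ ‖(h : ℂ) ^ 2 * deriv (deriv X) t‖ + ‖2 * h * deriv X t * w t‖ := norm_add_le _ _
            _ = h ^ 2 * ‖deriv (deriv X) t‖ + 2 * h * ‖deriv X t‖ * ‖w t‖ := by
              simp only [norm_mul, norm_pow, hhn, Complex.norm_ofNat]
            _ ≤ 1 ^ 2 * D + 2 * 1 * D * (2 * η) := by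
              gcongr
              exact hwn _ hm
            _ = _ := by ring

/-- Pointwise comparison turned into a comparison of `L²` norms. -/
lemma norm_le_of_pointwise {A B m : ℝ} (hA : 0 ≤ A) (hB : 0 ≤ B) (hm : 0 < m) {f g : ℝ → ℂ}
    {b₁ l₁ b₂ l₂ : ℝ} (hl₁ : 0 ≤ l₁) (hl₂ : 0 ≤ l₂)
    (hg : ∀ x, ‖g x‖ ≤ A * ‖f x‖ + (closedBall b₁ l₁).indicator (fun _ => B) x)
    (hf : ∀ x ∈ closedBall b₂ l₂, m ≤ ‖f x‖)
    (F G : Lp ℂ 2 (volume : Measure ℝ)) (hF : ∀ᵐ x : ℝ, (F : ℝ → ℂ) x = f x)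
    (hG : ∀ᵐ x : ℝ, (G : ℝ → ℂ) x = g x) :
    ‖G‖ ≤ A * ‖F‖ + B * √(2 * l₁) ∧ m * √(2 * l₂) ≤ ‖F‖ := by
  have hvol : ∀ (b l : ℝ), volume (closedBall b l) ≠ ⊤ := fun b l => measure_closedBall_lt_top.ne
  have hnorm : ∀ (b l C : ℝ), 0 ≤ C → 0 ≤ l →
      ‖indicatorConstLp 2 (measurableSet_closedBall (x := b) (ε := l)) (hvol b l) C‖ =
        C * √(2 * l) := by
    intro b l C hC hl
    rw [norm_indicatorConstLp (by norm_num) (by norm_num), Real.norm_of_nonneg hC, Measure.real,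
      Real.volume_closedBall, ENNReal.toReal_ofReal (by positivity), Real.sqrt_eq_rpow]
    simp
  constructor
  · have hFn : MemLp (fun x => ‖(F : ℝ → ℂ) x‖) 2 volume := (Lp.memLp F).norm
    set F' : Lp ℝ 2 (volume : Measure ℝ) := hFn.toLp _ with hF'
    have hF'n : ‖F'‖ ≤ ‖F‖ := by
      apply Lp.norm_le_norm_of_ae_le
      filter_upwards [hFn.coeFn_toLp] with x hx
      rw [hx]; simp
    set E := indicatorConstLp 2 (measurableSet_closedBall (x := b₁) (ε := l₁)) (hvol b₁ l₁) B with hE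
    have h1 : ‖G‖ ≤ ‖A • F' + E‖ := by
      apply Lp.norm_le_norm_of_ae_le
      filter_upwards [hFn.coeFn_toLp, hF, hG, Lp.coeFn_add (A • F') E, Lp.coeFn_smul A F',
        indicatorConstLp_coeFn (p := 2) (hs := measurableSet_closedBall (x := b₁) (ε := l₁))
          (hμs := hvol b₁ l₁) (c := B)] with x x1 x2 x3 x4 x5 x6
      rw [x4, Pi.add_apply, x5, Pi.smul_apply, x1, x6, x3, x2, smul_eq_mul]
      exact (hg x).trans (le_abs_self _)
    refine h1.trans ((norm_add_le _ _).trans (add_le_add ?_ (hnorm _ _ _ hB hl₁).le))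
    rw [norm_smul, Real.norm_of_nonneg hA]
    gcongr
  · rw [← hnorm b₂ l₂ m hm.le hl₂]
    apply Lp.norm_le_norm_of_ae_le
    filter_upwards [hF, indicatorConstLp_coeFn (p := 2)
      (hs := measurableSet_closedBall (x := b₂) (ε := l₂)) (hμs := hvol b₂ l₂) (c := m)] with x x1 x2
    rw [x1, x2]
    by_cases hx : x ∈ closedBall b₂ l₂
    · rw [Set.indicator_of_mem hx, Real.norm_of_nonneg hm.le]; exact hf x hx
    · rw [Set.indicator_of_notMem hx]; simp

/-! ### Rescaling to high energy -/

/-- The open sector between the directions `1` and `c` consists of the numbers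
`η ^ 2 + c * a ^ n` with `η` and `a` positive. -/
lemma exists_sector_repr {n : ℕ} (hn : n ≠ 0) {c z : ℂ} (hre : 0 < c.re) (him : 0 < c.im)
    (hz1 : 0 < z.arg) (hz2 : z.arg < c.arg) :
    ∃ a η : ℝ, 0 < a ∧ 0 < η ∧ z = (η : ℂ) ^ 2 + c * (a : ℂ) ^ n := by
  have hc0 : c ≠ 0 := fun h => by simp [h] at hre
  have hz0 : z ≠ 0 := fun h => by simp [h] at hz1
  have hcpi : c.arg ≤ Real.pi := Complex.arg_le_pi c
  have hzn : 0 < ‖z‖ := norm_pos_iff.2 hz0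
  have hcn : 0 < ‖c‖ := norm_pos_iff.2 hc0
  have hzim : 0 < z.im := by
    rw [← Complex.norm_mul_sin_arg z]
    exact mul_pos hzn (Real.sin_pos_of_pos_of_lt_pi hz1 (by linarith))
  have hcross : 0 < c.im * z.re - c.re * z.im := by
    rw [← Complex.norm_mul_sin_arg z, ← Complex.norm_mul_sin_arg c, ← Complex.norm_mul_cos_arg z,
      ← Complex.norm_mul_cos_arg c]
    have hs : 0 < Real.sin (c.arg - z.arg) :=
      Real.sin_pos_of_pos_of_lt_pi (by linarith) (by linarith)
    rw [Real.sin_sub] at hs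
    have := mul_pos (mul_pos hcn hzn) hs
    linarith
  have hb : 0 < z.im / c.im := div_pos hzim him
  have he : 0 < z.re - z.im / c.im * c.re := by
    have : z.re - z.im / c.im * c.re = (c.im * z.re - c.re * z.im) / c.im := by field_simp
    rw [this]
    exact div_pos hcross him
  refine ⟨(z.im / c.im) ^ ((n : ℝ)⁻¹), √(z.re - z.im / c.im * c.re), Real.rpow_pos_of_pos hb _,
    Real.sqrt_pos.2 he, ?_⟩
  rw [← Complex.ofReal_pow, ← Complex.ofReal_pow, Real.sq_sqrt he.le,
    Real.rpow_inv_natCast_pow hb.le hn]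
  apply Complex.ext
  · simp; ring
  · simp; field_simp

/-- After rescaling, the lower-order terms of the potential are `O(1/s)`. -/
lemma norm_rescaled_sub_le {n : ℕ} (hn : 0 < n) (c : ℕ → ℂ) {s M : ℝ} (hs : 1 ≤ s)
    {y : ℂ} (hy : ‖y‖ ≤ M) :
    ‖(∑ m ∈ Finset.Icc 1 n, c m * ((s : ℂ) * y) ^ m) / (s : ℂ) ^ n - c n * y ^ n‖ ≤
      (∑ m ∈ Finset.Icc 1 n, ‖c m‖ * M ^ m) / s := by
  have hs0 : 0 < s := by linarith
  have hsC : (s : ℂ) ≠ 0 := by exact_mod_cast hs0.ne'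
  have hM : 0 ≤ M := (norm_nonneg _).trans hy
  have hmem : n ∈ Finset.Icc 1 n := Finset.mem_Icc.2 ⟨hn, le_rfl⟩
  rw [← Finset.add_sum_erase _ _ hmem, ← Finset.add_sum_erase _ _ hmem]
  have h1 : (c n * ((s : ℂ) * y) ^ n + ∑ m ∈ (Finset.Icc 1 n).erase n, c m * ((s : ℂ) * y) ^ m) /
      (s : ℂ) ^ n - c n * y ^ n =
      ∑ m ∈ (Finset.Icc 1 n).erase n, c m * ((s : ℂ) * y) ^ m / (s : ℂ) ^ n := by
    rw [← Finset.sum_div, add_div, mul_pow]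
    field_simp
    ring
  rw [h1, add_div, Finset.sum_div]
  have h2 : 0 ≤ ‖c n‖ * M ^ n / s := by positivity
  refine (norm_sum_le _ _).trans (le_trans (Finset.sum_le_sum fun m hm => ?_)
    (le_add_of_nonneg_left h2))
  obtain ⟨hmn, hm⟩ := Finset.mem_erase.1 hm
  have hlt : m + 1 ≤ n := lt_of_le_of_ne (Finset.mem_Icc.1 hm).2 hmn
  have hns : ‖(s : ℂ)‖ = s := by rw [Complex.norm_real, Real.norm_eq_abs, abs_of_pos hs0]
  rw [norm_div, norm_mul, norm_pow, norm_mul, norm_pow, hns, mul_pow, div_le_div_iff₀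
    (by positivity) hs0]
  calc ‖c m‖ * (s ^ m * ‖y‖ ^ m) * s = ‖c m‖ * ‖y‖ ^ m * s ^ (m + 1) := by ring
    _ ≤ ‖c m‖ * M ^ m * s ^ n := by gcongr

/-- Exponential smallness beats every power. -/
lemma exp_neg_div_le_pow {γ h : ℝ} (hγ : 0 < γ) (h0 : 0 < h) (M : ℕ) :
    Real.exp (-γ / h) ≤ (M.factorial / γ ^ M) * h ^ M := by
  have := Real.pow_div_factorial_le_exp (γ / h) (by positivity) M
  rw [neg_div, Real.exp_neg, inv_le_comm₀ (Real.exp_pos _) (by positivity)]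
  refine le_of_eq_of_le ?_ this
  rw [div_pow]
  field_simp

lemma mul_le_pow_add_sub_pow {n : ℕ} (hn : 0 < n) {a t : ℝ} (ha : 0 ≤ a) (ht : 0 ≤ t) :
    a ^ (n - 1) * t ≤ (a + t) ^ n - a ^ n := by
  obtain ⟨m, rfl⟩ := Nat.exists_eq_add_of_lt hn
  simp only [zero_add, Nat.add_sub_cancel]
  have h : a ^ m ≤ (a + t) ^ m := by gcongr; linarith
  have := mul_le_mul_of_nonneg_right h (add_nonneg ha ht)
  rw [pow_succ, pow_succ]
  linarith

lemma pow_sub_sub_pow_le {n : ℕ} (hn : 0 < n) {a t : ℝ} (ht : 0 ≤ t) (hta : t ≤ a) :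
    (a - t) ^ n - a ^ n ≤ -(a ^ (n - 1) * t) := by
  obtain ⟨m, rfl⟩ := Nat.exists_eq_add_of_lt hn
  simp only [zero_add, Nat.add_sub_cancel]
  have h : (a - t) ^ m ≤ a ^ m := pow_le_pow_left₀ (by linarith) (by linarith) _
  have := mul_le_mul_of_nonneg_right h (sub_nonneg.2 hta)
  rw [pow_succ, pow_succ]
  linarith

set_option maxHeartbeats 1600000 in
/-- The pseudomodes at energy `s ^ n * z`: test functions that the operator shrinks by more than any
prescribed power of `s`. -/
lemma exists_pseudomode (n : ℕ) (hn : Even n) (hn0 : 0 < n) (c : ℕ → ℂ)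
    (hre : 0 < (c n).re) (him : 0 < (c n).im)
    (z : ℂ) (hz1 : 0 < z.arg) (hz2 : z.arg < (c n).arg) (k : ℕ) :
    ∃ S : ℝ, ∀ s : ℝ, S ≤ s → 1 ≤ s → ∃ f : ℝ → ℂ, ContDiff ℝ (⊤ : ℕ∞) f ∧ HasCompactSupport f ∧
      ∀ F G : Lp ℂ 2 (volume : Measure ℝ), (∀ᵐ x : ℝ, (F : ℝ → ℂ) x = f x) →
        (∀ᵐ x : ℝ, (G : ℝ → ℂ) x = -deriv (deriv f) x
          + (∑ m ∈ Finset.Icc 1 n, c m * (x:ℂ)^m) * f x - ((s ^ n : ℝ) : ℂ) * z * f x) →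
        0 < ‖F‖ ∧ s ^ (n * k) * ‖G‖ ≤ ‖F‖ := by
  obtain ⟨p, hp⟩ := hn
  obtain ⟨a, η, ha, hη, hz⟩ := exists_sector_repr hn0.ne' hre him hz1 hz2
  obtain ⟨r, hr, hball⟩ : ∃ r > 0, ∀ y ∈ ball (a : ℂ) r,
      ‖c n * y ^ n - z + (η : ℂ) ^ 2‖ ≤ η ^ 2 / 8 := by
    have hcont : Continuous fun y : ℂ => ‖c n * y ^ n - z + (η : ℂ) ^ 2‖ := by fun_prop
    have hlt : ‖c n * (a : ℂ) ^ n - z + (η : ℂ) ^ 2‖ < η ^ 2 / 8 := by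
      have : c n * (a : ℂ) ^ n - z + (η : ℂ) ^ 2 = 0 := by rw [hz]; ring
      rw [this, norm_zero]
      positivity
    obtain ⟨r, hr, H⟩ := Metric.eventually_nhds_iff_ball.1
      (hcont.continuousAt.eventually_lt_const hlt)
    exact ⟨r, hr, fun y hy => (H y hy).le⟩
  set ρ := min (r / 4) a with hρdef
  have hρ : 0 < ρ := by positivity
  have hρr : ρ ≤ r / 4 := min_le_left _ _
  have hρa : ρ ≤ a := min_le_right _ _
  obtain ⟨X, hX, hX1, hX0, D, hD, hXD⟩ := exists_cutoff a hρ
  set N := n + n * k with hN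
  obtain ⟨C, hC, h₀, hh₀, Hric⟩ := exists_riccati_s17 (a : ℂ) (r := r) hη N (2 * ρ) (by linarith)
    (by linarith)
  set K := ∑ m ∈ Finset.Icc 1 n, ‖c m‖ * (a + r) ^ m with hK
  have hK0 : 0 ≤ K := by positivity
  set κ := (c n).im * a ^ (n - 1) with hκ
  have hκ0 : 0 < κ := by positivity
  set γ := κ / (4 * η) * ρ ^ 2 / 16 with hγ
  have hγ0 : 0 < γ := by positivity
  set T := C + (D + 4 * η * D) * ((N + 2).factorial / γ ^ (N + 2)) * √ρ / Real.exp (-(2 * η)) with hT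
  refine ⟨8 * K / η ^ 2 + 1 / h₀ + 2 / ρ + T + 2 * (K + C) * ρ / (η * γ), fun s hS hs1 => ?_⟩
  have hs0 : 0 < s := by linarith
  have t1 : 0 ≤ 8 * K / η ^ 2 := by positivity
  have t2 : 0 ≤ 1 / h₀ := by positivity
  have t3 : 0 ≤ 2 / ρ := by positivity
  have t4 : 0 ≤ T := by positivity
  have t5 : 0 ≤ 2 * (K + C) * ρ / (η * γ) := by positivity
  set h := (s⁻¹) ^ (p + 1) with hh
  have h0 : 0 < h := by positivity
  have hsinv : s⁻¹ ≤ 1 := inv_le_one_of_one_le₀ hs1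
  have hhs : h ≤ s⁻¹ := by
    rw [hh, pow_succ]
    exact mul_le_of_le_one_left (by positivity) (pow_le_one₀ (by positivity) hsinv)
  have h1 : h ≤ 1 := hhs.trans hsinv
  have hhh₀ : h ≤ h₀ := by
    refine hhs.trans (inv_le_of_inv_le₀ hh₀ ?_)
    rw [← one_div]; linarith
  have hhρ : h ≤ ρ / 2 := by
    refine hhs.trans (inv_le_of_inv_le₀ (by positivity) ?_)
    rw [inv_div]; linarith
  have hKs : K / s ≤ η ^ 2 / 8 := by
    rw [div_le_iff₀ hs0]
    have : 8 * K / η ^ 2 ≤ s := by linarith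
    rw [div_le_iff₀ (by positivity)] at this
    linarith
  set Q : ℂ → ℂ := fun y =>
    (∑ m ∈ Finset.Icc 1 n, c m * ((s : ℂ) * y) ^ m) / (s : ℂ) ^ n - z with hQ
  have hQd : Differentiable ℂ Q := by
    rw [hQ]; fun_prop
  have hQs : ∀ y ∈ ball (a : ℂ) r, ‖Q y - (c n * y ^ n - z)‖ ≤ K / s := by
    intro y hy
    have hyn : ‖y‖ ≤ a + r := by
      have h2 : ‖y‖ ≤ ‖(a : ℂ)‖ + ‖y - a‖ := by
        simpa using norm_add_le (a : ℂ) (y - a)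
      rw [mem_ball, Complex.dist_eq] at hy
      rw [Complex.norm_real, Real.norm_eq_abs, abs_of_pos ha] at h2
      linarith
    have := norm_rescaled_sub_le hn0 c hs1 hyn
    rw [hQ]
    simpa using this
  have hQη : ∀ y ∈ ball (a : ℂ) r, ‖Q y + (η : ℂ) ^ 2‖ ≤ η ^ 2 / 4 := by
    intro y hy
    calc ‖Q y + (η : ℂ) ^ 2‖
        = ‖(Q y - (c n * y ^ n - z)) + (c n * y ^ n - z + (η : ℂ) ^ 2)‖ := by ring_nf
      _ ≤ K / s + η ^ 2 / 8 := (norm_add_le _ _).trans (add_le_add (hQs y hy) (hball y hy))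
      _ ≤ _ := by linarith
  obtain ⟨w, hw, Hw⟩ := Hric Q h hQd.differentiableOn hQη h0 hhh₀
  obtain ⟨W, hWa, hW⟩ := hw.isExactOn_ball.with_val_at (a : ℂ) 0
  set δ := (K + C) / s with hδ
  have hδ0 : 0 ≤ δ := by positivity
  have hKδ : K / s ≤ δ := by rw [hδ]; gcongr; linarith
  have hCδ : C * h ≤ δ := by
    calc C * h ≤ C * s⁻¹ := by gcongr
      _ = C / s := by rw [div_eq_mul_inv]
      _ ≤ δ := by rw [hδ]; gcongr; linarith
  have hImQ : ∀ t : ℝ, |t - a| ≤ ρ →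
      |(Q t).im - (c n).im * (t ^ n - a ^ n)| ≤ δ := by
    intro t ht
    have hm : (t : ℂ) ∈ ball (a : ℂ) r := by
      rw [mem_ball, Complex.dist_eq, ← Complex.ofReal_sub, Complex.norm_real, Real.norm_eq_abs]
      linarith
    have h3 := (Complex.abs_im_le_norm _).trans ((hQs t hm).trans hKδ)
    have h4 : (Q t - (c n * (t : ℂ) ^ n - z)).im = (Q t).im - (c n).im * (t ^ n - a ^ n) := by
      rw [hz, ← Complex.ofReal_pow, ← Complex.ofReal_pow, ← Complex.ofReal_pow]
      simp only [Complex.sub_im, Complex.add_im, Complex.im_mul_ofReal, Complex.ofReal_im]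
      ring
    rwa [h4] at h3
  have hQp : ∀ t : ℝ, 0 ≤ t → t ≤ ρ → κ * t - δ ≤ (Q (a + t : ℝ)).im := by
    intro t ht htρ
    have h5 := (abs_le.1 (hImQ (a + t) (by simpa [abs_of_nonneg ht] using htρ))).1
    have h6 := mul_le_pow_add_sub_pow hn0 ha.le ht
    have := mul_le_mul_of_nonneg_left h6 him.le
    rw [hκ]
    linarith
  have hQm : ∀ t : ℝ, 0 ≤ t → t ≤ ρ → (Q (a - t : ℝ)).im ≤ -(κ * t) + δ := by
    intro t ht htρ
    have h5 := (abs_le.1 (hImQ (a - t) (by simpa [abs_of_nonneg ht] using htρ))).2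
    have h6 := pow_sub_sub_pow_le hn0 ht (htρ.trans hρa)
    have := mul_le_mul_of_nonneg_left h6 him.le
    rw [hκ]
    linarith
  have hdec : ∀ t : ℝ, ρ / 2 ≤ |t - a| → |t - a| ≤ ρ → (W t).re ≤ -γ := by
    intro t ht1 ht2
    have h9 := phase_re_le hη hκ0.le hδ0 hW hWa
      (fun y hy => ⟨(Hw y hy).1, (Hw y hy).2.1, (Hw y hy).2.2.1.trans hCδ⟩) hQp hQm t ht2 hρ
    have h10 : 2 * δ / η * ρ ≤ γ := by
      have : 2 * (K + C) * ρ / (η * γ) ≤ s := by linarith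
      rw [div_le_iff₀ (by positivity)] at this
      rw [hδ]
      have e : 2 * ((K + C) / s) / η * ρ = 2 * (K + C) * ρ / (η * s) := by field_simp
      rw [e, div_le_iff₀ (by positivity)]
      linarith
    have h11 : 2 * δ / η * |t - a| ≤ 2 * δ / η * ρ := by gcongr
    have h12 : (ρ / 2) ^ 2 ≤ |t - a| ^ 2 := by gcongr
    have h13 : κ / (4 * η) / 2 * (ρ / 2) ^ 2 ≤ κ / (4 * η) / 2 * |t - a| ^ 2 := by gcongr
    have h14 : κ / (4 * η) / 2 * (ρ / 2) ^ 2 = 2 * γ := by rw [hγ]; ring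
    linarith
  obtain ⟨u, hu, hu0, hulow, hures⟩ := exists_quasimode hη h0 h1 hhρ hX hX1 hX0 hD hXD hw hW hWa
    (fun y hy => (Hw y hy).2.1) (fun y hy => (Hw y hy).2.2.2) hdec
  have hball_iff : ∀ (x l : ℝ), |s⁻¹ * x - a| ≤ l ↔ x ∈ closedBall (s * a) (s * l) := by
    intro x l
    rw [mem_closedBall, Real.dist_eq]
    have : x - s * a = s * (s⁻¹ * x - a) := by field_simp
    rw [this, abs_mul, abs_of_pos hs0, mul_le_mul_iff_right₀ hs0]
  have hd1 : deriv (fun x => u (s⁻¹ * x)) = fun x => s⁻¹ • deriv u (s⁻¹ * x) := by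
    funext x; exact deriv_comp_mul_left _ _ _
  have hd2 : ∀ x, deriv (deriv fun x => u (s⁻¹ * x)) x =
      (s : ℂ)⁻¹ ^ 2 * deriv (deriv u) (s⁻¹ * x) := by
    intro x
    rw [hd1]
    have hdu : Differentiable ℝ (deriv u) :=
      (contDiff_infty_iff_deriv.1 hu).2.differentiable (by simp)
    have := deriv_comp_mul_left s⁻¹ (fun x => s⁻¹ • deriv u x) x
    rw [this, deriv_fun_const_smul _ (hdu _), smul_smul, Complex.real_smul]
    push_cast
    ring
  refine ⟨fun x => u (s⁻¹ * x), hu.comp (contDiff_const.mul contDiff_id), ?_, ?_⟩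
  · refine HasCompactSupport.intro (isCompact_closedBall (s * a) (s * ρ)) fun x hx => ?_
    rw [← hball_iff, not_le] at hx
    exact hu0 _ hx.le
  intro F G hF hG
  have hsC : (s : ℂ) ≠ 0 := by exact_mod_cast hs0.ne'
  have hscale : ∀ x : ℝ, -deriv (deriv fun x => u (s⁻¹ * x)) x
      + (∑ m ∈ Finset.Icc 1 n, c m * (x:ℂ)^m) * u (s⁻¹ * x) - ((s ^ n : ℝ) : ℂ) * z * u (s⁻¹ * x) =
      (s : ℂ) ^ n * (-(h : ℂ) ^ 2 * deriv (deriv u) (s⁻¹ * x) +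
        Q (s⁻¹ * x : ℝ) * u (s⁻¹ * x)) := by
    intro x
    have hh2 : (s : ℂ) ^ n * (h : ℂ) ^ 2 = (s : ℂ)⁻¹ ^ 2 := by
      rw [hh, hp]
      push_cast
      rw [inv_pow, inv_pow]
      field_simp
      ring
    rw [hd2, hQ]
    have hx : (s : ℂ) * ((s⁻¹ * x : ℝ) : ℂ) = x := by push_cast; field_simp
    simp only [hx]
    set P := ∑ m ∈ Finset.Icc 1 n, c m * (x : ℂ) ^ m
    have hP : (s : ℂ) ^ n * (P / (s : ℂ) ^ n) = P := mul_div_cancel₀ _ (pow_ne_zero _ hsC)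
    rw [Complex.ofReal_pow]
    linear_combination deriv (deriv u) (s⁻¹ * x) * hh2 - u (s⁻¹ * x) * hP
  obtain ⟨hGle, hFge⟩ := norm_le_of_pointwise (A := s ^ n * (C * h ^ (N + 1)))
    (B := s ^ n * ((D + 4 * η * D) * Real.exp (-γ / h))) (m := Real.exp (-(2 * η)))
    (b₁ := s * a) (l₁ := s * ρ) (b₂ := s * a) (l₂ := s * h)
    (by positivity) (by positivity) (Real.exp_pos _) (by positivity) (by positivity)
    (fun x => by
      rw [hscale x, norm_mul, norm_pow, Complex.norm_real, Real.norm_eq_abs, abs_of_pos hs0]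
      refine (mul_le_mul_of_nonneg_left (hures (s⁻¹ * x)) (by positivity)).trans (le_of_eq ?_)
      rw [mul_add, mul_assoc (s ^ n)]
      congr 1
      by_cases hx : |s⁻¹ * x - a| ≤ ρ
      · rw [Set.indicator_of_mem (by simpa [Real.dist_eq] using hx),
          Set.indicator_of_mem ((hball_iff x ρ).1 hx)]
      · rw [Set.indicator_of_notMem (by simpa [Real.dist_eq] using hx),
          Set.indicator_of_notMem (fun h' => hx ((hball_iff x ρ).2 h')), mul_zero])
    (fun x hx => hulow _ ((hball_iff x h).2 hx)) F G hF hG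
  set m₀ := Real.exp (-(2 * η)) with hm₀
  have hm₀0 : 0 < m₀ := Real.exp_pos _
  have hsq : 0 < √(2 * (s * h)) := by positivity
  refine ⟨lt_of_lt_of_le (by positivity) hFge, ?_⟩
  -- The supports have lengths comparable to `s ρ` and `s h`; the ratio costs a factor `√ρ / h`.
  have hratio : √(2 * (s * ρ)) ≤ √ρ / h / m₀ * ‖F‖ := by
    have e1 : √(2 * (s * ρ)) ≤ √ρ / h * √(2 * (s * h)) := by
      apply Real.sqrt_le_iff.2 ⟨by positivity, ?_⟩
      rw [mul_pow, div_pow, Real.sq_sqrt hρ.le, Real.sq_sqrt (by positivity)]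
      have : ρ / h ^ 2 * (2 * (s * h)) = 2 * (s * ρ) / h := by field_simp
      rw [this, le_div_iff₀ h0]
      exact mul_le_of_le_one_right (by positivity) h1
    refine e1.trans ?_
    rw [div_mul_eq_mul_div _ m₀, le_div_iff₀ hm₀0, mul_assoc, mul_comm _ m₀]
    gcongr
  have hexp := exp_neg_div_le_pow hγ0 h0 (N + 2)
  have hG2 : ‖G‖ ≤ s ^ n * (T * h ^ (N + 1)) * ‖F‖ := by
    refine hGle.trans ?_
    have e2 : s ^ n * ((D + 4 * η * D) * Real.exp (-γ / h)) * √(2 * (s * ρ)) ≤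
        s ^ n * ((D + 4 * η * D) * (((N + 2).factorial / γ ^ (N + 2)) * h ^ (N + 2))) *
          (√ρ / h / m₀ * ‖F‖) := by
      gcongr
    refine (add_le_add_right e2 _).trans (le_of_eq ?_)
    rw [hT]
    field_simp
    ring
  have hfin : s ^ (n * k) * (s ^ n * (T * h ^ (N + 1))) ≤ 1 := by
    have e3 : h ^ (N + 1) ≤ s⁻¹ ^ (N + 1) := by gcongr
    have hTs : T ≤ s := by linarith
    calc s ^ (n * k) * (s ^ n * (T * h ^ (N + 1)))
        ≤ s ^ (n * k) * (s ^ n * (s * s⁻¹ ^ (N + 1))) := by gcongr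
      _ = s ^ (N + 1) * s⁻¹ ^ (N + 1) := by rw [hN]; ring
      _ = 1 := by rw [← mul_pow, mul_inv_cancel₀ hs0.ne', one_pow]
  calc s ^ (n * k) * ‖G‖ ≤ s ^ (n * k) * (s ^ n * (T * h ^ (N + 1)) * ‖F‖) := by gcongr
    _ = s ^ (n * k) * (s ^ n * (T * h ^ (N + 1))) * ‖F‖ := by ring
    _ ≤ 1 * ‖F‖ := by gcongr
    _ = ‖F‖ := one_mul _

end Pseudomode

/-- Theorem 2 of the paper: for `H` any closed extension in `L²(ℝ)`
of `P² + ∑_{m=1}^n c_m Q^m` on `C_c^∞(ℝ)` with `n` even, `Re c_n > 0`, `Im c_n > 0`,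
and `z` with `0 < arg z < arg c_n`, the resolvent norm `‖(H - σz)⁻¹‖` diverges
faster than any power of `σ` as `σ → +∞`.  The resolvent is encoded as any bounded
operator `R` inverting `H - σz` on test functions (no such `R` exists when
`σz ∈ Spec H`, in which case the norm is interpreted as `+∞`). -/
theorem high_energy_resolvent_blowup
    (n : ℕ) (hn : Even n) (hn0 : 0 < n) (c : ℕ → ℂ)
    (hre : 0 < (c n).re) (him : 0 < (c n).im)
    (z : ℂ) (hz1 : 0 < z.arg) (hz2 : z.arg < (c n).arg) :
    ∀ k : ℕ, ∃ σ₀ > 0, ∀ σ : ℝ, σ₀ ≤ σ →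
      ∀ R : Lp ℂ 2 (volume : Measure ℝ) →L[ℂ] Lp ℂ 2 (volume : Measure ℝ),
        (∀ f : ℝ → ℂ, ContDiff ℝ (⊤ : ℕ∞) f → HasCompactSupport f →
          ∀ F G : Lp ℂ 2 (volume : Measure ℝ),
            (∀ᵐ x : ℝ, (F : ℝ → ℂ) x = f x) →
            (∀ᵐ x : ℝ, (G : ℝ → ℂ) x = -deriv (deriv f) x
              + (∑ m ∈ Finset.Icc 1 n, c m * (x:ℂ)^m) * f x - (σ:ℂ) * z * f x) →
            R G = F) →
        σ ^ k ≤ ‖R‖ := by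
  intro k
  obtain ⟨S, hS⟩ := Pseudomode.exists_pseudomode n hn hn0 c hre him z hz1 hz2 k
  have hS1 : 1 ≤ max S 1 := le_max_right _ _
  refine ⟨(max S 1) ^ n, by positivity, fun σ hσ R hR => ?_⟩
  have hσ0 : 0 ≤ σ := le_trans (by positivity) hσ
  set s := σ ^ ((n : ℝ)⁻¹) with hs
  have hs0 : 0 ≤ s := Real.rpow_nonneg hσ0 _
  have hsn : s ^ n = σ := Real.rpow_inv_natCast_pow hσ0 hn0.ne'
  have hSs : max S 1 ≤ s := by
    rw [← hsn] at hσ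
    exact le_of_pow_le_pow_left₀ hn0.ne' hs0 hσ
  obtain ⟨f, hf, hfs, H⟩ := hS s ((le_max_left _ _).trans hSs) (hS1.trans hSs)
  rw [hsn] at H
  have hf2 : ContDiff ℝ (⊤ : ℕ∞) (deriv (deriv f)) :=
    (contDiff_infty_iff_deriv.1 (contDiff_infty_iff_deriv.1 hf).2).2
  have hF : MemLp f 2 volume := hf.continuous.memLp_of_hasCompactSupport hfs
  have hG : MemLp (fun x : ℝ => -deriv (deriv f) x
      + (∑ m ∈ Finset.Icc 1 n, c m * (x:ℂ)^m) * f x - (σ:ℂ) * z * f x) 2 volume := by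
    have hc1 := hf.continuous
    have hc2 := hf2.continuous
    refine Continuous.memLp_of_hasCompactSupport (by fun_prop) ?_
    exact (hfs.deriv.deriv.neg.add hfs.mul_left).sub hfs.mul_left
  obtain ⟨hpos, hle⟩ := H (hF.toLp f) (hG.toLp _) hF.coeFn_toLp hG.coeFn_toLp
  have hRG := hR f hf hfs (hF.toLp f) (hG.toLp _) hF.coeFn_toLp hG.coeFn_toLp
  have hRn : ‖hF.toLp f‖ ≤ ‖R‖ * ‖hG.toLp _‖ := by
    rw [← hRG]; exact R.le_opNorm _
  have hpk : s ^ (n * k) = σ ^ k := by rw [pow_mul, hsn]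
  rw [hpk] at hle
  have hGpos : 0 < ‖hG.toLp _‖ := by
    by_contra hcon
    have : ‖hG.toLp _‖ = 0 := le_antisymm (not_lt.1 hcon) (norm_nonneg _)
    rw [this, mul_zero] at hRn
    linarith
  exact le_of_mul_le_mul_right (hle.trans hRn) hGpos
end
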